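/- arXiv:1509.02226 — 4 statements merged into one kernel-verified Lean document; each statement's English description precedes it below -/
import Mathlib

section
/- Counting function estimate: suppose ρ(α) < ρ < 1 and δ > 0. There exists a constant C (depending only on δ, ρ, γ₋, γ₊) such that for every q_k ∈ Q(α,ρ), every x ∈ [0,1), and all E ≤ E': Ñ_{q_k}(x,E') − Ñ_{q_k}(x,E) ≤ (E' − E) q_k (1 + δ) / (λ(1 − ρ)γ₋) + C. The same bound holds for the Dirichlet eigenvalue counting function N_{q_k}(x,E). -/
/-!
Write `n = q_k`, `s = q_{k-1}` and `η = |q_{k-1} α - p_{k-1}|`. The cyclic shift `i ↦ i + s` of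
`Fin n` (or its inverse, according to the sign of `q_{k-1} α - p_{k-1}`) carries each orbit point
`x + i α` of the circle to its neighbour: it moves every point forward by `η` or by
`η + |q_k α - p_k|`, because consecutive errors have opposite signs (`exists_cyclic_shift`). The
total displacement is `q_k |q_{k-1} α - p_{k-1}| + q_{k-1} |q_k α - p_k| = 1`, so exactly one point
crosses the discontinuity of `v` (`exists_unique_crossing`), and all other diagonal entries of the
periodic matrix grow by at least `λ γ₋ η`.

The shift preserves both the off-diagonal part and the spectrum of the periodic matrix. Min-max with
one constraint (`countEigLE_le_of_form_le`) then says that raising the energy by `λ γ₋ η` adds at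
most one eigenvalue (`periodic_spacing`). Iterating gives `(E' - E) / (λ γ₋ η) + 1`, and
`q_k η ≥ 1 - q_{k-1} / q_{k+1} ≥ 1 - ρ` (`le_cfDen_mul_cfErr`) turns this into the claimed slope.

The Dirichlet matrix has the same quadratic form on vectors vanishing at site `0`, so its counting
function differs from the periodic one by at most `1`. Altogether `C = 3` suffices.
-/

open MeasureTheory Filter

noncomputable section

/-- Iterates of the Gauss map applied to the fractional part of `α`. -/
noncomputable def gaussIter (α : ℝ) : ℕ → ℝ
  | 0 => Int.fract α
  | n + 1 => Int.fract (1 / gaussIter α n)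

/-- The continued fraction partial quotient `a_{k+1}` of `α`. -/
noncomputable def cfA (α : ℝ) (k : ℕ) : ℕ := (⌊1 / gaussIter α k⌋).toNat

/-- Denominators `q_k` of the continued fraction convergents of `α`. -/
noncomputable def cfDen (α : ℝ) : ℕ → ℕ
  | 0 => 1
  | 1 => cfA α 0
  | k + 2 => cfA α (k + 1) * cfDen α (k + 1) + cfDen α k

/-- `ρ(α) = liminf_{k → ∞} q_{k-1} / q_{k+1}`. -/
noncomputable def cfRho (α : ℝ) : ℝ :=
  Filter.liminf (fun k : ℕ => (cfDen α k : ℝ) / (cfDen α (k + 2) : ℝ)) Filter.atTop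

/-- The periodic restriction `H̃_n(x)`: the `n × n` symmetric matrix with diagonal entries
`λ v(x + mα)` and entries `1` at positions `(m, (m ± 1) mod n)`. -/
noncomputable def periodicMat (lam : ℝ) (v : ℝ → ℝ) (α : ℝ) (n : ℕ) (x : ℝ) :
    Matrix (Fin n) (Fin n) ℝ :=
  fun i j =>
    if i = j then lam * v (x + ((i : ℕ) : ℝ) * α)
    else if (j : ℕ) = ((i : ℕ) + 1) % n ∨ (j : ℕ) = ((i : ℕ) + n - 1) % n then 1 else 0

/-- The Dirichlet restriction `H_n(x)`: the `n × n` tridiagonal matrix with diagonal entries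
`λ v(x + mα)` and entries `1` on the sub- and superdiagonals. -/
noncomputable def dirichletMat (lam : ℝ) (v : ℝ → ℝ) (α : ℝ) (n : ℕ) (x : ℝ) :
    Matrix (Fin n) (Fin n) ℝ :=
  fun i j =>
    if i = j then lam * v (x + ((i : ℕ) : ℝ) * α)
    else if (j : ℕ) = (i : ℕ) + 1 ∨ (i : ℕ) = (j : ℕ) + 1 then 1 else 0

/-- `P_n(x,E) = det (H_n(x) - E)`. -/
noncomputable def detP (lam : ℝ) (v : ℝ → ℝ) (α : ℝ) (n : ℕ) (x E : ℝ) : ℝ :=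
  (dirichletMat lam v α n x - E • (1 : Matrix (Fin n) (Fin n) ℝ)).det

/-- The number of eigenvalues of `M` (roots of its characteristic polynomial, with
multiplicity) lying in `(-∞, E]`. -/
noncomputable def countEigLE {n : ℕ} (M : Matrix (Fin n) (Fin n) ℝ) (E : ℝ) : ℕ :=
  ((Matrix.charpoly M).roots.filter (fun μ => μ ≤ E)).card


/-! ### Continued fraction denominators and errors -/

theorem cfGauss_pos {α : ℝ} (hα : Irrational α) (k : ℕ) :
    Irrational (gaussIter α k) ∧ 0 < gaussIter α k ∧ gaussIter α k < 1 := by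
  have key : ∀ y : ℝ, Irrational y → Irrational (Int.fract y) ∧ 0 < Int.fract y ∧ Int.fract y < 1 := by
    intro y hy
    have h1 : Irrational (Int.fract y) := by
      have := hy.sub_intCast ⌊y⌋
      rwa [Int.self_sub_floor] at this
    exact ⟨h1, lt_of_le_of_ne (Int.fract_nonneg y) (Ne.symm h1.ne_zero), Int.fract_lt_one y⟩
  induction k with
  | zero => exact key α hα
  | succ k ih =>
    refine key _ ?_
    rw [one_div]
    exact ih.1.inv

theorem cfA_mul {α : ℝ} (hα : Irrational α) (k : ℕ) :
    (cfA α k : ℝ) * gaussIter α k = 1 - gaussIter α k * gaussIter α (k + 1) := by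
  obtain ⟨-, h0, -⟩ := cfGauss_pos hα k
  have h1 : (cfA α k : ℝ) = (⌊1 / gaussIter α k⌋ : ℝ) := by
    have : (0 : ℤ) ≤ ⌊1 / gaussIter α k⌋ := Int.floor_nonneg.2 (by positivity)
    unfold cfA
    exact_mod_cast Int.toNat_of_nonneg this
  have h2 : gaussIter α (k + 1) = 1 / gaussIter α k - ⌊1 / gaussIter α k⌋ := rfl
  rw [h1, h2]
  field_simp
  ring

theorem cfA_pos {α : ℝ} (hα : Irrational α) (k : ℕ) : 1 ≤ cfA α k := by
  obtain ⟨-, h0, h1⟩ := cfGauss_pos hα k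
  have : (1 : ℤ) ≤ ⌊1 / gaussIter α k⌋ := by
    rw [Int.le_floor]
    push_cast
    rw [le_div_iff₀ h0]
    linarith
  unfold cfA
  omega

theorem cfDen_pos {α : ℝ} (hα : Irrational α) : ∀ k, 1 ≤ cfDen α k
  | 0 => le_rfl
  | 1 => cfA_pos hα 0
  | k + 2 => by
    have := cfDen_pos hα k
    simp only [cfDen]
    omega

theorem cfDen_le_succ {α : ℝ} (hα : Irrational α) (k : ℕ) : cfDen α k ≤ cfDen α (k + 1) := by
  cases k with
  | zero => exact cfA_pos hα 0
  | succ k =>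
    have := cfA_pos hα (k + 1)
    simp only [cfDen]
    nlinarith

/-- The product `g₀ ⋯ g_k` of Gauss iterates, equal to the approximation error `|q_k α - p_k|`. -/
def cfErr (α : ℝ) (k : ℕ) : ℝ := ∏ i ∈ Finset.range (k + 1), gaussIter α i

theorem cfErr_pos {α : ℝ} (hα : Irrational α) (k : ℕ) : 0 < cfErr α k :=
  Finset.prod_pos fun i _ => (cfGauss_pos hα i).2.1

/-- The errors satisfy the recurrence of the denominators with alternating signs. -/
theorem cfErr_succ_succ {α : ℝ} (hα : Irrational α) (k : ℕ) :
    cfErr α (k + 2) = cfErr α k - cfA α (k + 1) * cfErr α (k + 1) := by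
  have h := cfA_mul hα (k + 1)
  have h1 : cfErr α (k + 1) = cfErr α k * gaussIter α (k + 1) := Finset.prod_range_succ _ _
  have h2 : cfErr α (k + 2) = cfErr α (k + 1) * gaussIter α (k + 2) := Finset.prod_range_succ _ _
  rw [h2, h1]
  linear_combination cfErr α k * h

/-- `q_k α` lies within the alternating error of an integer, the numerator `p_k`. -/
theorem cfDen_mul_eq {α : ℝ} (hα : Irrational α) :
    ∀ k, ∃ p : ℤ, (cfDen α k : ℝ) * α = p + (-1) ^ k * cfErr α k
  | 0 => ⟨⌊α⌋, by simp [cfDen, cfErr, gaussIter]⟩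
  | 1 => by
    refine ⟨cfA α 0 * ⌊α⌋ + 1, ?_⟩
    have h := cfA_mul hα 0
    have h0 : gaussIter α 0 = α - ⌊α⌋ := rfl
    have h1 : cfErr α 1 = gaussIter α 0 * gaussIter α 1 := by
      simp [cfErr, Finset.prod_range_succ]
    rw [h1]
    simp only [cfDen]
    push_cast
    rw [h0] at h ⊢
    linear_combination h
  | k + 2 => by
    obtain ⟨p, hp⟩ := cfDen_mul_eq hα k
    obtain ⟨p', hp'⟩ := cfDen_mul_eq hα (k + 1)
    refine ⟨cfA α (k + 1) * p' + p, ?_⟩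
    rw [cfErr_succ_succ hα]
    simp only [cfDen]
    push_cast
    linear_combination hp + cfA α (k + 1) * hp'

theorem cfDen_cfErr_sum {α : ℝ} (hα : Irrational α) (k : ℕ) :
    (cfDen α (k + 1) : ℝ) * cfErr α k + cfDen α k * cfErr α (k + 1) = 1 := by
  induction k with
  | zero =>
    have h := cfA_mul hα 0
    simp only [cfErr, cfDen, Finset.prod_range_succ, Finset.prod_range_zero]
    push_cast
    linear_combination h
  | succ k ih =>
    rw [cfErr_succ_succ hα]
    have : (cfDen α (k + 2) : ℝ) = cfA α (k + 1) * cfDen α (k + 1) + cfDen α k := by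
      simp [cfDen]
    rw [show k + 1 + 1 = k + 2 from rfl, this]
    linear_combination ih

/-- Follows from `cfDen_cfErr_sum` and `|q_{k+1} α - p_{k+1}| ≤ 1 / q_{k+2}`. -/
theorem le_cfDen_mul_cfErr {α ρ : ℝ} (hα : Irrational α) (k : ℕ)
    (h : (cfDen α k : ℝ) / (cfDen α (k + 2) : ℝ) ≤ ρ) :
    1 - ρ ≤ cfDen α (k + 1) * cfErr α k := by
  have h1 := cfDen_cfErr_sum hα k
  have h2 := cfDen_cfErr_sum hα (k + 1)
  have q2 : (0 : ℝ) < cfDen α (k + 2) := by exact_mod_cast cfDen_pos hα (k + 2)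
  have h3 : cfErr α (k + 1) ≤ 1 / cfDen α (k + 2) := by
    rw [le_div_iff₀ q2]
    have := cfErr_pos hα (k + 2)
    have : (0 : ℝ) ≤ cfDen α (k + 1) * cfErr α (k + 2) := by positivity
    linarith
  have h4 : (cfDen α k : ℝ) * cfErr α (k + 1) ≤ cfDen α k * (1 / cfDen α (k + 2)) := by gcongr
  rw [mul_one_div] at h4
  linarith

/-! ### Eigenvalue counting and min-max -/

theorem countEigLE_eq_card {n : ℕ} {A : Matrix (Fin n) (Fin n) ℝ} (hA : A.IsHermitian) (E : ℝ) :
    countEigLE A E = Fintype.card {i // hA.eigenvalues i ≤ E} := by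
  rw [countEigLE, hA.roots_charpoly_eq_eigenvalues, Multiset.filter_map, Multiset.card_map,
    Fintype.card_subtype]
  rfl

theorem dotProduct_self_eq_sum {n : ℕ} {A : Matrix (Fin n) (Fin n) ℝ} (hA : A.IsHermitian)
    (u : Fin n → ℝ) :
    u ⬝ᵥ u = ∑ i, ((hA.eigenvectorBasis i).ofLp ⬝ᵥ u) ^ 2 := by
  have h := hA.eigenvectorBasis.sum_inner_mul_inner (WithLp.toLp 2 u) (WithLp.toLp 2 u)
  simp only [EuclideanSpace.inner_eq_star_dotProduct, star_trivial] at h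
  rw [← h]
  refine Finset.sum_congr rfl fun i _ => ?_
  rw [dotProduct_comm u, sq]

theorem dotProduct_mulVec_eq_sum {n : ℕ} {A : Matrix (Fin n) (Fin n) ℝ} (hA : A.IsHermitian)
    (u : Fin n → ℝ) :
    u ⬝ᵥ A.mulVec u = ∑ i, hA.eigenvalues i * ((hA.eigenvectorBasis i).ofLp ⬝ᵥ u) ^ 2 := by
  have h := hA.eigenvectorBasis.sum_inner_mul_inner (WithLp.toLp 2 u) (WithLp.toLp 2 (A.mulVec u))
  simp only [EuclideanSpace.inner_eq_star_dotProduct, star_trivial] at h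
  rw [dotProduct_comm, ← h]
  refine Finset.sum_congr rfl fun i _ => ?_
  have hT : A.transpose = A := by
    have := hA.eq
    rwa [Matrix.conjTranspose_eq_transpose_of_trivial] at this
  have h2 : A.mulVec u ⬝ᵥ (hA.eigenvectorBasis i).ofLp
      = hA.eigenvalues i * ((hA.eigenvectorBasis i).ofLp ⬝ᵥ u) := by
    rw [dotProduct_comm, Matrix.dotProduct_mulVec, ← Matrix.mulVec_transpose, hT,
      hA.mulVec_eigenvectorBasis, smul_dotProduct, smul_eq_mul]
  rw [h2]
  ring

/-- Min-max with one constraint: if `B + c ≤ A` as quadratic forms on the coordinate hyperplane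
`u i₀ = 0`, then `A` has at most one more eigenvalue in `(-∞, E + c]` than `B` has in `(-∞, E]`. -/
theorem countEigLE_le_of_form_le {n : ℕ} {A B : Matrix (Fin n) (Fin n) ℝ} (hA : A.IsHermitian)
    (hB : B.IsHermitian) (i₀ : Fin n) (c : ℝ)
    (h : ∀ u : Fin n → ℝ, u i₀ = 0 → u ⬝ᵥ B.mulVec u + c * (u ⬝ᵥ u) ≤ u ⬝ᵥ A.mulVec u)
    (E : ℝ) : countEigLE A (E + c) ≤ countEigLE B E + 1 := by
  by_contra! hlt
  rw [countEigLE_eq_card hA, countEigLE_eq_card hB] at hlt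
  let dA (i : Fin n) : (Fin n → ℝ) →ₗ[ℝ] ℝ := dotProductBilin ℝ ℝ (hA.eigenvectorBasis i).ofLp
  let dB (i : Fin n) : (Fin n → ℝ) →ₗ[ℝ] ℝ := dotProductBilin ℝ ℝ (hB.eigenvectorBasis i).ofLp
  -- A common zero of the coordinate `i₀`, the high modes of `A` and the low modes of `B`.
  let f : (Fin n → ℝ) →ₗ[ℝ] (({i // ¬ hA.eigenvalues i ≤ E + c} → ℝ) ×
      ({i // hB.eigenvalues i ≤ E} → ℝ)) × ℝ :=
    ((LinearMap.pi fun i => dA i.1).prod (LinearMap.pi fun i => dB i.1)).prod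
      (LinearMap.proj i₀)
  have hcard := Fintype.card_subtype_compl (fun i => hA.eigenvalues i ≤ E + c)
  have hle := Fintype.card_subtype_le (fun i => hA.eigenvalues i ≤ E + c)
  have hker : f.ker ≠ ⊥ := by
    apply LinearMap.ker_ne_bot_of_finrank_lt
    simp only [Module.finrank_prod, Module.finrank_fintype_fun_eq_card, Module.finrank_self]
    omega
  obtain ⟨u, hu, hu0⟩ := Submodule.exists_mem_ne_zero_of_ne_bot hker
  have hu' : f u = 0 := hu
  have hfA : ∀ i, ¬ hA.eigenvalues i ≤ E + c → (hA.eigenvectorBasis i).ofLp ⬝ᵥ u = 0 :=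
    fun i hi => congrFun (congrArg (fun w => w.1.1) hu') ⟨i, hi⟩
  have hfB : ∀ i, hB.eigenvalues i ≤ E → (hB.eigenvectorBasis i).ofLp ⬝ᵥ u = 0 :=
    fun i hi => congrFun (congrArg (fun w => w.1.2) hu') ⟨i, hi⟩
  have hf0 : u i₀ = 0 := congrArg (fun w => w.2) hu'
  have h1 : u ⬝ᵥ A.mulVec u ≤ (E + c) * (u ⬝ᵥ u) := by
    rw [dotProduct_mulVec_eq_sum hA, dotProduct_self_eq_sum hA u, Finset.mul_sum]
    refine Finset.sum_le_sum fun i _ => ?_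
    by_cases hi : hA.eigenvalues i ≤ E + c
    · gcongr
    · simp [hfA i hi]
  have h2 : E * (u ⬝ᵥ u) < u ⬝ᵥ B.mulVec u := by
    have hpos : u ⬝ᵥ u ≠ 0 := fun h => hu0 (dotProduct_self_eq_zero.1 h)
    rw [dotProduct_self_eq_sum hB] at hpos
    obtain ⟨i, -, hi⟩ := Finset.exists_ne_zero_of_sum_ne_zero hpos
    rw [dotProduct_mulVec_eq_sum hB, dotProduct_self_eq_sum hB u, Finset.mul_sum]
    refine Finset.sum_lt_sum (fun j _ => ?_) ⟨i, Finset.mem_univ _, ?_⟩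
    · by_cases hj : hB.eigenvalues j ≤ E
      · simp [hfB j hj]
      · gcongr
        linarith
    · have : ¬ hB.eigenvalues i ≤ E := fun hj => hi (by rw [hfB i hj]; simp)
      have : 0 < ((hB.eigenvectorBasis i).ofLp ⬝ᵥ u) ^ 2 := lt_of_le_of_ne (sq_nonneg _) (Ne.symm hi)
      gcongr
      linarith
  have := h u hf0
  linarith

theorem countEigLE_mono {n : ℕ} (A : Matrix (Fin n) (Fin n) ℝ) : Monotone (countEigLE A) := by
  intro E E' h
  exact Multiset.card_le_card (Multiset.monotone_filter_right _ fun _ hb => hb.trans h)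

theorem countEigLE_sub_le {n : ℕ} {A : Matrix (Fin n) (Fin n) ℝ} {c : ℝ} (hc : 0 < c)
    (h : ∀ E, countEigLE A (E + c) ≤ countEigLE A E + 1) {E E' : ℝ} (hE : E ≤ E') :
    (countEigLE A E' : ℝ) - countEigLE A E ≤ (E' - E) / c + 1 := by
  have key : ∀ m : ℕ, countEigLE A (E + m * c) ≤ countEigLE A E + m := by
    intro m
    induction m with
    | zero => simp
    | succ m ih =>
      have := h (E + m * c)
      have e : E + m * c + c = E + (m + 1 : ℕ) * c := by push_cast; ring
      rw [e] at this
      omega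
  have h1 := key ⌈(E' - E) / c⌉₊
  have h2 : E' ≤ E + ⌈(E' - E) / c⌉₊ * c := by
    have := Nat.le_ceil ((E' - E) / c)
    rw [div_le_iff₀ hc] at this
    linarith
  have h3 : (countEigLE A E' : ℝ) ≤ countEigLE A E + ⌈(E' - E) / c⌉₊ := by
    exact_mod_cast (countEigLE_mono A h2).trans h1
  have h4 := Nat.ceil_lt_add_one (a := (E' - E) / c) (div_nonneg (by linarith) hc.le)
  linarith

/-! ### The periodic and Dirichlet matrices -/

theorem dirichletMat_isHermitian (lam : ℝ) (v : ℝ → ℝ) (α : ℝ) (n : ℕ) (x : ℝ) :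
    (dirichletMat lam v α n x).IsHermitian := by
  ext i j
  simp only [Matrix.conjTranspose_apply, star_trivial, dirichletMat]
  by_cases hij : i = j
  · subst hij; rfl
  · rw [if_neg hij, if_neg (Ne.symm hij)]
    simp only [or_comm]

theorem periodicMat_eq (lam : ℝ) (v : ℝ → ℝ) (α : ℝ) (n : ℕ) [NeZero n] (x : ℝ) (i j : Fin n) :
    periodicMat lam v α n x i j = if i = j then lam * v (x + ((i : ℕ) : ℝ) * α)
      else if j = i + 1 ∨ i = j + 1 then 1 else 0 := by
  have h1 : (j : ℕ) = ((i : ℕ) + 1) % n ↔ j = i + 1 := by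
    rw [Fin.ext_iff, Fin.val_add, Fin.val_one', Nat.add_mod_mod]
  have h2 : (j : ℕ) = ((i : ℕ) + n - 1) % n ↔ i = j + 1 := by
    rw [Fin.ext_iff, Fin.val_add, Fin.val_one', Nat.add_mod_mod]
    have hi := i.2
    have hj := j.2
    rcases Nat.eq_zero_or_pos (i : ℕ) with h0 | h0
    · rw [h0, Nat.zero_add, Nat.mod_eq_of_lt (by omega)]
      rcases Nat.lt_or_ge ((j : ℕ) + 1) n with h | h
      · rw [Nat.mod_eq_of_lt h]; omega
      · rw [show (j : ℕ) + 1 = n by omega, Nat.mod_self]; omega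
    · rw [show (i : ℕ) + n - 1 = (i - 1) + n by omega, Nat.add_mod_right,
        Nat.mod_eq_of_lt (by omega)]
      rcases Nat.lt_or_ge ((j : ℕ) + 1) n with h | h
      · rw [Nat.mod_eq_of_lt h]; omega
      · rw [show (j : ℕ) + 1 = n by omega, Nat.mod_self]; omega
  unfold periodicMat
  simp only [h1, h2]

theorem periodicMat_isHermitian (lam : ℝ) (v : ℝ → ℝ) (α : ℝ) (n : ℕ) [NeZero n] (x : ℝ) :
    (periodicMat lam v α n x).IsHermitian := by
  ext i j
  simp only [Matrix.conjTranspose_apply, star_trivial, periodicMat_eq]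
  by_cases hij : i = j
  · subst hij; rfl
  · rw [if_neg hij, if_neg (Ne.symm hij)]
    simp only [or_comm]

/-- The two restrictions differ only in the corner entries, which are invisible to vectors
vanishing at site `0`. -/
theorem periodic_form_eq_dirichlet (lam : ℝ) (v : ℝ → ℝ) (α : ℝ) (n : ℕ) [NeZero n] (x : ℝ)
    (u : Fin n → ℝ) (hu : u 0 = 0) :
    u ⬝ᵥ (periodicMat lam v α n x).mulVec u = u ⬝ᵥ (dirichletMat lam v α n x).mulVec u := by
  simp only [dotProduct, Matrix.mulVec, Finset.mul_sum]
  refine Finset.sum_congr rfl fun i _ => Finset.sum_congr rfl fun j _ => ?_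
  by_cases hi : i = 0
  · simp [hi, hu]
  by_cases hj : j = 0
  · simp [hj, hu]
  have hi' : (i : ℕ) ≠ 0 := fun h => hi (Fin.ext h)
  have hj' : (j : ℕ) ≠ 0 := fun h => hj (Fin.ext h)
  have key : ∀ a b : Fin n, (b : ℕ) ≠ 0 → (b = a + 1 ↔ (b : ℕ) = a + 1) := by
    intro a b hb
    have ha := a.2
    rw [Fin.ext_iff, Fin.val_add, Fin.val_one', Nat.add_mod_mod]
    rcases Nat.lt_or_ge ((a : ℕ) + 1) n with h | h
    · rw [Nat.mod_eq_of_lt h]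
    · rw [show (a : ℕ) + 1 = n by omega, Nat.mod_self]; omega
  simp only [periodicMat_eq, dirichletMat, key i j hj', key j i hi']

/-- If a cyclic shift `i ↦ i + s` raises every diagonal entry but one by at least `c`, then
raising the energy by `c` adds at most one eigenvalue. -/
theorem periodic_step {lam : ℝ} {v : ℝ → ℝ} {α : ℝ} {n : ℕ} [NeZero n] {x c : ℝ} (s i₀ : Fin n)
    (h : ∀ i, i ≠ i₀ → lam * v (x + ((i : ℕ) : ℝ) * α) + c
      ≤ lam * v (x + (((i + s : Fin n) : ℕ) : ℝ) * α)) (E : ℝ) :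
    countEigLE (periodicMat lam v α n x) (E + c) ≤ countEigLE (periodicMat lam v α n x) E + 1 := by
  set A := periodicMat lam v α n x with hAdef
  have hA : A.IsHermitian := periodicMat_isHermitian lam v α n x
  set A' := Matrix.reindex (Equiv.addRight s).symm (Equiv.addRight s).symm A with hA'
  have hA'H : A'.IsHermitian := by
    rw [hA', Matrix.reindex_apply]
    exact hA.submatrix _
  have hcount : countEigLE A' (E + c) = countEigLE A (E + c) := by
    rw [countEigLE, hA', Matrix.charpoly_reindex, countEigLE]
  rw [← hcount]
  refine countEigLE_le_of_form_le hA'H hA i₀ c (fun u hu => ?_) E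
  have hent : ∀ i j, A' i j = A (i + s) (j + s) := fun i j => rfl
  have hoff : ∀ i j, i ≠ j → A' i j = A i j := by
    intro i j hij
    rw [hent, hAdef, periodicMat_eq, periodicMat_eq, if_neg (by simpa using hij), if_neg hij]
    have e1 : ∀ a b : Fin n, b + s = a + s + 1 ↔ b = a + 1 := by
      intro a b
      rw [add_right_comm, add_left_inj]
    simp only [e1]
  simp only [dotProduct, Matrix.mulVec, Finset.mul_sum, ← Finset.sum_add_distrib]
  refine Finset.sum_le_sum fun i _ => ?_
  have h0 : ∑ j, u i * (A' i j * u j) - ∑ j, u i * (A i j * u j)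
      = (A' i i - A i i) * (u i * u i) := by
    rw [← Finset.sum_sub_distrib, Finset.sum_eq_single i]
    · ring
    · intro j _ hj
      rw [hoff i j hj.symm]; ring
    · simp
  by_cases hi : i = i₀
  · rw [hi, hu]; simp
  · have h1 := h i hi
    have h2 : c ≤ A' i i - A i i := by
      rw [hent, hAdef, periodicMat_eq, periodicMat_eq, if_pos rfl, if_pos rfl]
      linarith
    have h3 := mul_le_mul_of_nonneg_right h2 (mul_self_nonneg (u i))
    linarith

/-! ### Shifting the orbit of the rotation -/

/-- A permutation moving each point `y i` of the circle forward by `d i > 0`, with total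
displacement `1`, pushes only one point across `0`. -/
theorem exists_unique_crossing {n : ℕ} (y d : Fin n → ℝ) (z : Fin n → ℤ) (σ : Equiv.Perm (Fin n))
    (hd : ∀ i, 0 < d i) (hsum : ∑ i, d i = 1) (hy : ∀ i, y (σ i) = y i + z i + d i) :
    ∃ i₀, ∀ i, i ≠ i₀ → Int.fract (y (σ i)) = Int.fract (y i) + d i := by
  -- The number of times point `i` wraps around.
  let w : Fin n → ℤ := fun i => ⌊y (σ i)⌋ - ⌊y i⌋ - z i
  have hw : ∀ i, Int.fract (y (σ i)) = Int.fract (y i) + d i - w i := by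
    intro i
    simp only [Int.fract, w]
    push_cast
    linarith [hy i]
  have hw0 : ∀ i, 0 ≤ w i := by
    intro i
    have h1 := Int.fract_lt_one (y (σ i))
    have h2 := Int.fract_nonneg (y i)
    have h3 : (-1 : ℝ) < w i := by linarith [hw i, hd i]
    have h4 : (-1 : ℤ) < w i := by exact_mod_cast h3
    omega
  have hws : ∑ i, w i = 1 := by
    have h1 : ∑ i, Int.fract (y (σ i)) = ∑ i, Int.fract (y i) :=
      Equiv.sum_comp σ fun i => Int.fract (y i)
    simp only [hw, Finset.sum_sub_distrib, Finset.sum_add_distrib, hsum] at h1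
    have h2 : (∑ i, (w i : ℝ)) = 1 := by linarith
    exact_mod_cast h2
  obtain ⟨i₀, -, hi₀⟩ := Finset.exists_ne_zero_of_sum_ne_zero (hws.trans_ne one_ne_zero)
  refine ⟨i₀, fun i hi => ?_⟩
  have h1 : w i₀ + w i ≤ 1 := by
    rw [← hws, ← Finset.sum_pair hi.symm]
    exact Finset.sum_le_sum_of_subset_of_nonneg (Finset.subset_univ _) fun j _ _ => hw0 j
  have h2 : w i = 0 := by
    have := hw0 i
    have := hw0 i₀
    omega
  rw [hw, h2]
  simp

theorem sum_shift_displacement {n s : ℕ} (hs : s ≤ n) (a b : ℝ) :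
    ∑ i : Fin n, (if (i : ℕ) + s < n then a else a + b) = n * a + s * b := by
  rw [Fin.sum_univ_eq_sum_range (fun i => if i + s < n then a else a + b) n]
  obtain ⟨m, rfl⟩ := Nat.exists_eq_add_of_le' hs
  rw [Finset.sum_range_add]
  have h1 : ∑ i ∈ Finset.range m, (if i + s < m + s then a else a + b) = m * a := by
    rw [Finset.sum_congr rfl (g := fun _ => a)]
    · simp
    · intro i hi
      rw [if_pos (by simpa using hi)]
  have h2 : ∑ i ∈ Finset.range s, (if m + i + s < m + s then a else a + b) = s * (a + b) := by
    rw [Finset.sum_congr rfl (g := fun _ => a + b)]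
    · simp [mul_add]
    · intro i hi
      rw [if_neg (by omega)]
  rw [h1, h2]
  push_cast
  ring

/-- Cyclically shifting the first `q_{k+1}` orbit points of the rotation by `± q_k` indices moves
every point forward by at least `|q_k α - p_k|`, with total displacement `1`. The sign is
that of `q_k α - p_k`. -/
theorem exists_cyclic_shift {α : ℝ} (hα : Irrational α) (k : ℕ) [NeZero (cfDen α (k + 1))] :
    ∃ (s : Fin (cfDen α (k + 1))) (d : Fin (cfDen α (k + 1)) → ℝ) (z : Fin (cfDen α (k + 1)) → ℤ),
      (∀ i, cfErr α k ≤ d i) ∧ ∑ i, d i = 1 ∧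
      ∀ i, (((i + s : Fin (cfDen α (k + 1))) : ℕ) : ℝ) * α = ((i : ℕ) : ℝ) * α + z i + d i := by
  obtain ⟨p, hp⟩ := cfDen_mul_eq hα k
  obtain ⟨p', hp'⟩ := cfDen_mul_eq hα (k + 1)
  have hle := cfDen_le_succ hα k
  have hD := cfDen_cfErr_sum hα k
  have hpos := cfErr_pos hα (k + 1)
  set n := cfDen α (k + 1) with hn
  let s₀ : Fin n := Fin.ofNat n (cfDen α k)
  let d₀ : Fin n → ℝ := fun i =>
    if (i : ℕ) + cfDen α k < n then cfErr α k else cfErr α k + cfErr α (k + 1)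
  let z₀ : Fin n → ℤ := fun i => if (i : ℕ) + cfDen α k < n then p else p - p'
  have hd₀ : ∀ i, cfErr α k ≤ d₀ i := by
    intro i
    simp only [d₀]
    split_ifs <;> linarith
  have hsum₀ : ∑ i, d₀ i = 1 := by
    rw [← hD]
    exact sum_shift_displacement hle _ _
  have hmove : ∀ i, (((i + s₀ : Fin n) : ℕ) : ℝ) * α
      = ((i : ℕ) : ℝ) * α + z₀ i + (-1) ^ k * d₀ i := by
    intro i
    have hval : ((i + s₀ : Fin n) : ℕ) = ((i : ℕ) + cfDen α k) % n := by
      simp [s₀, Fin.val_add]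
    have hi := i.2
    rw [hval]
    simp only [z₀, d₀]
    by_cases h : (i : ℕ) + cfDen α k < n
    · rw [if_pos h, if_pos h, Nat.mod_eq_of_lt h]
      push_cast
      linear_combination hp
    · have e : ((i : ℕ) + cfDen α k) % n = i + cfDen α k - n := by
        rw [Nat.mod_eq_sub_mod (by omega)]
        exact Nat.mod_eq_of_lt (by omega)
      rw [if_neg h, if_neg h, e, Nat.cast_sub (by omega)]
      push_cast
      rw [pow_succ] at hp'
      linear_combination hp - hp'
  rcases Nat.even_or_odd k with hk | hk
  · refine ⟨s₀, d₀, z₀, hd₀, hsum₀, fun i => ?_⟩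
    rw [hmove, hk.neg_one_pow, one_mul]
  · refine ⟨-s₀, fun i => d₀ (i + -s₀), fun i => -z₀ (i + -s₀), fun i => hd₀ _, ?_, fun i => ?_⟩
    · rw [← hsum₀]
      exact Equiv.sum_comp (Equiv.addRight (-s₀)) d₀
    · have := hmove (i + -s₀)
      rw [neg_add_cancel_right, hk.neg_one_pow] at this
      push_cast
      linarith

/-- The spacing estimate for the periodic restriction: raising the energy by
`λ γ₋ |q_k α - p_k|` adds at most one eigenvalue of `H̃_{q_{k+1}}(x)`. -/
theorem periodic_spacing {α lam γm : ℝ} {v : ℝ → ℝ} (hα : Irrational α) (hlam : 0 < lam)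
    (hγm : 0 < γm) (hper : ∀ x : ℝ, v (x + 1) = v x)
    (hv : ∀ x y : ℝ, 0 ≤ x → x ≤ y → y < 1 → γm * (y - x) ≤ v y - v x)
    (k : ℕ) [NeZero (cfDen α (k + 1))] (x E : ℝ) :
    countEigLE (periodicMat lam v α (cfDen α (k + 1)) x) (E + lam * γm * cfErr α k)
      ≤ countEigLE (periodicMat lam v α (cfDen α (k + 1)) x) E + 1 := by
  obtain ⟨s, d, z, hd, hsum, hmove⟩ := exists_cyclic_shift hα k
  have herr := cfErr_pos hα k
  obtain ⟨i₀, hi₀⟩ := exists_unique_crossing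
    (fun i : Fin (cfDen α (k + 1)) => x + ((i : ℕ) : ℝ) * α) d z (Equiv.addRight s)
    (fun i => herr.trans_le (hd i)) hsum
    (fun i => by
      have := hmove i
      simp only [Equiv.coe_addRight]
      linarith)
  refine periodic_step s i₀ (fun i hi => ?_) E
  have hfr : ∀ y, v y = v (Int.fract y) := by
    intro y
    have hp : Function.Periodic v 1 := hper
    have := hp.sub_zsmul_eq (x := y) ⌊y⌋
    rw [zsmul_one] at this
    exact this.symm
  have h1 := hi₀ i hi
  simp only [Equiv.coe_addRight] at h1
  rw [hfr (x + ((i : ℕ) : ℝ) * α), hfr (x + (((i + s : Fin _) : ℕ) : ℝ) * α)]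
  have h2 := hv _ _ (Int.fract_nonneg (x + ((i : ℕ) : ℝ) * α))
    (by rw [h1]; linarith [hd i]) (Int.fract_lt_one (x + (((i + s : Fin _) : ℕ) : ℝ) * α))
  have h3 : γm * cfErr α k ≤ v (Int.fract (x + (((i + s : Fin _) : ℕ) : ℝ) * α))
      - v (Int.fract (x + ((i : ℕ) : ℝ) * α)) := by
    refine le_trans ?_ h2
    gcongr
    rw [h1]
    linarith [hd i]
  have h4 := mul_le_mul_of_nonneg_left h3 hlam.le
  linarith

/-- estimate on the eigenvalue counting functions of `H̃_{q_k}(x)` and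
`H_{q_k}(x)`. -/
theorem counting_function_estimate
    (γm γp ρ δ : ℝ) (hγm : 0 < γm) (hγp : 0 < γp) (hρ1 : ρ < 1) (hδ : 0 < δ) :
    ∃ C : ℝ,
      ∀ (α lam : ℝ) (v : ℝ → ℝ),
        Irrational α → 0 < lam → (∀ x : ℝ, v (x + 1) = v x) → v 0 = 0 →
        (∀ x y : ℝ, 0 ≤ x → x ≤ y → y < 1 →
          γm * (y - x) ≤ v y - v x ∧ v y - v x ≤ γp * (y - x)) →
        cfRho α < ρ →
        ∀ k : ℕ, 1 ≤ k →
          (cfDen α (k - 1) : ℝ) / (cfDen α (k + 1) : ℝ) ≤ ρ →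
          ∀ x ∈ Set.Ico (0:ℝ) 1, ∀ E E' : ℝ, E ≤ E' →
            ((countEigLE (periodicMat lam v α (cfDen α k) x) E' : ℝ)
                - (countEigLE (periodicMat lam v α (cfDen α k) x) E : ℝ)
              ≤ (E' - E) * (cfDen α k : ℝ) * (1 + δ) / (lam * (1 - ρ) * γm) + C) ∧
            ((countEigLE (dirichletMat lam v α (cfDen α k) x) E' : ℝ)
                - (countEigLE (dirichletMat lam v α (cfDen α k) x) E : ℝ)
              ≤ (E' - E) * (cfDen α k : ℝ) * (1 + δ) / (lam * (1 - ρ) * γm) + C) := by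
  refine ⟨3, ?_⟩
  intro α lam v hα hlam hper hv0 hv hcf k hk hrat x hx E E' hE
  obtain ⟨k, rfl⟩ : ∃ m, k = m + 1 := ⟨k - 1, by omega⟩
  simp only [Nat.add_sub_cancel] at hrat
  have hq : 0 < cfDen α (k + 1) := cfDen_pos hα (k + 1)
  have : NeZero (cfDen α (k + 1)) := ⟨hq.ne'⟩
  have herr := cfErr_pos hα k
  have hgap := le_cfDen_mul_cfErr hα k hrat
  have hq' : (0 : ℝ) < cfDen α (k + 1) := by exact_mod_cast hq
  have hρ : 0 < 1 - ρ := by linarith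
  have hP := countEigLE_sub_le (by positivity)
    (periodic_spacing hα hlam hγm hper (fun a b ha hab hb => (hv a b ha hab hb).1) k x) hE
  have hbound : (E' - E) / (lam * γm * cfErr α k)
      ≤ (E' - E) * (cfDen α (k + 1) : ℝ) * (1 + δ) / (lam * (1 - ρ) * γm) := by
    have hE0 : 0 ≤ E' - E := by linarith
    rw [div_le_div_iff₀ (by positivity) (by positivity)]
    calc (E' - E) * (lam * (1 - ρ) * γm)
        ≤ (E' - E) * (lam * (cfDen α (k + 1) * cfErr α k) * γm) := by gcongr
      _ = (E' - E) * cfDen α (k + 1) * 1 * (lam * γm * cfErr α k) := by ring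
      _ ≤ (E' - E) * cfDen α (k + 1) * (1 + δ) * (lam * γm * cfErr α k) := by
        gcongr
        linarith
  have hPH := periodicMat_isHermitian lam v α (cfDen α (k + 1)) x
  have hDH := dirichletMat_isHermitian lam v α (cfDen α (k + 1)) x
  have h1 := countEigLE_le_of_form_le hDH hPH 0 0
    (fun u hu => by simp [periodic_form_eq_dirichlet lam v α _ x u hu]) E'
  have h2 := countEigLE_le_of_form_le hPH hDH 0 0
    (fun u hu => by simp [periodic_form_eq_dirichlet lam v α _ x u hu]) E
  rw [add_zero] at h1 h2
  have h1' : (countEigLE (dirichletMat lam v α (cfDen α (k + 1)) x) E' : ℝ)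
      ≤ countEigLE (periodicMat lam v α (cfDen α (k + 1)) x) E' + 1 := by exact_mod_cast h1
  have h2' : (countEigLE (periodicMat lam v α (cfDen α (k + 1)) x) E : ℝ)
      ≤ countEigLE (dirichletMat lam v α (cfDen α (k + 1)) x) E + 1 := by exact_mod_cast h2
  constructor <;> linarith

end
end

section
/- Let 0 < m ≤ M, let A₁ and A₂ be finite subsets of [m, M] with the same cardinality, let f be a nondecreasing function on [m, M], and let N ≥ 0. Assume that for every t ∈ ℝ, |#{a ∈ A₁ : a ≤ t} − #{a ∈ A₂ : a ≤ t}| ≤ N. Then |∑_{a ∈ A₁} f(a) − ∑_{a ∈ A₂} f(a)| ≤ 2N · max{|f(m)|, |f(M)|}. -/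
/-!
The bound follows from Abel summation. Let `c` be the difference of the indicator functions of `A₁`
and `A₂`. Since the two sets have the same cardinality, the difference of the sums equals
`-∑ a ∈ A₁ ∪ A₂, c a * (f M - f a)`. The partial sums of `c` in increasing order are the
differences of the counting functions, hence bounded by `N`, so `abs_weighted_sum_le` bounds this
by `N * (f M - f m)`, which is at most `2 * N * max |f m| |f M|`.
-/

open MeasureTheory Filter

noncomputable section

/-- Abel summation bound, by induction on the largest element `b` of `S`: replacing `f x` by `f b`
changes the sum by `f x - f b` times the full sum of `c`, and then the term at `b` vanishes. -/
theorem abs_weighted_sum_le (m M : ℝ) (f : ℝ → ℝ) (hf : MonotoneOn f (Set.Icc m M))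
    (N : ℝ) (hN : 0 ≤ N) (c : ℝ → ℝ) (S : Finset ℝ) :
    (∀ a ∈ S, a ∈ Set.Icc m M) →
    (∀ t ∈ S, |∑ a ∈ S.filter (fun a => a ≤ t), c a| ≤ N) →
    ∀ x ∈ Set.Icc m M, (∀ a ∈ S, a ≤ x) →
      |∑ a ∈ S, c a * (f x - f a)| ≤ N * (f x - f m) := by
  induction S using Finset.induction_on_max with
  | empty =>
    intro _ _ x hx _
    have := hf ⟨le_rfl, hx.1.trans hx.2⟩ hx hx.1
    simpa using mul_nonneg hN (sub_nonneg.2 this)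
  | insert b S hb ih =>
    intro hS hc x hx hxS
    have hbS : b ∉ S := fun h => lt_irrefl _ (hb b h)
    have hbI := hS b (Finset.mem_insert_self _ _)
    have hbx := hf hbI hx (hxS b (Finset.mem_insert_self _ _))
    have ih' := ih (fun a ha => hS a (Finset.mem_insert_of_mem ha)) (fun t ht => by
      have h := hc t (Finset.mem_insert_of_mem ht)
      rwa [Finset.filter_insert, if_neg (not_le.2 (hb t ht))] at h) b hbI
      (fun a ha => (hb a ha).le)
    have hfull := hc b (Finset.mem_insert_self _ _)
    rw [Finset.filter_true_of_mem (fun a ha => by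
      rcases Finset.mem_insert.1 ha with rfl | h
      · exact le_rfl
      · exact (hb a h).le)] at hfull
    have key : ∑ a ∈ insert b S, c a * (f x - f a)
        = (∑ a ∈ insert b S, c a) * (f x - f b) + ∑ a ∈ S, c a * (f b - f a) := by
      rw [Finset.sum_insert hbS, Finset.sum_insert hbS, add_mul, add_assoc, Finset.sum_mul,
        ← Finset.sum_add_distrib]
      congr 1
      exact Finset.sum_congr rfl fun a _ => by ring
    rw [key]
    calc _ ≤ |(∑ a ∈ insert b S, c a) * (f x - f b)| + |∑ a ∈ S, c a * (f b - f a)| :=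
          abs_add_le _ _
      _ ≤ N * (f x - f b) + N * (f b - f m) := by
          rw [abs_mul, abs_of_nonneg (sub_nonneg.2 hbx)]
          exact add_le_add (mul_le_mul_of_nonneg_right hfull (sub_nonneg.2 hbx)) ih'
      _ = N * (f x - f m) := by ring

/-- comparison of sums over two finite sets with close counting functions. -/
theorem sum_comparison_of_counting
    (m M : ℝ) (hm : 0 < m) (hmM : m ≤ M)
    (A₁ A₂ : Finset ℝ) (hA₁ : ↑A₁ ⊆ Set.Icc m M) (hA₂ : ↑A₂ ⊆ Set.Icc m M)
    (hcard : A₁.card = A₂.card)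
    (f : ℝ → ℝ) (hf : MonotoneOn f (Set.Icc m M))
    (N : ℝ) (hN : 0 ≤ N)
    (hcount : ∀ t : ℝ,
      |((A₁.filter (fun a => a ≤ t)).card : ℝ) - ((A₂.filter (fun a => a ≤ t)).card : ℝ)|
        ≤ N) :
    |∑ a ∈ A₁, f a - ∑ a ∈ A₂, f a| ≤ 2 * N * max |f m| |f M| := by
  classical
  set c : ℝ → ℝ := fun a => (if a ∈ A₁ then 1 else 0) - (if a ∈ A₂ then 1 else 0) with hc
  have hI : ∀ a ∈ A₁ ∪ A₂, a ∈ Set.Icc m M := fun a ha => by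
    rcases Finset.mem_union.1 ha with h | h
    · exact hA₁ h
    · exact hA₂ h
  have hsum : ∀ g : ℝ → ℝ, ∑ a ∈ A₁ ∪ A₂, c a * g a = ∑ a ∈ A₁, g a - ∑ a ∈ A₂, g a := by
    intro g
    simp only [hc, sub_mul, ite_mul, one_mul, zero_mul, Finset.sum_sub_distrib,
      Finset.sum_ite_mem, Finset.union_inter_cancel_left, Finset.union_inter_cancel_right]
  have hpart : ∀ t ∈ A₁ ∪ A₂, |∑ a ∈ (A₁ ∪ A₂).filter (fun a => a ≤ t), c a| ≤ N := by
    intro t _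
    have h := hsum fun a => if a ≤ t then 1 else 0
    simp only [mul_ite, mul_one, mul_zero, ← Finset.sum_filter, Finset.sum_const, nsmul_eq_mul] at h
    rw [h]
    exact hcount t
  have hmain := abs_weighted_sum_le m M f hf N hN c (A₁ ∪ A₂) hI hpart M ⟨hmM, le_rfl⟩
    (fun a ha => (hI a ha).2)
  rw [hsum fun a => f M - f a] at hmain
  simp only [Finset.sum_sub_distrib, Finset.sum_const, hcard, sub_sub_sub_cancel_left] at hmain
  rw [abs_sub_comm] at hmain
  have h1 : f M ≤ max |f m| |f M| := (le_abs_self _).trans (le_max_right _ _)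
  have h2 : -f m ≤ max |f m| |f M| := (neg_le_abs _).trans (le_max_left _ _)
  calc _ ≤ N * (f M - f m) := hmain
    _ ≤ N * (2 * max |f m| |f M|) := mul_le_mul_of_nonneg_left (by linarith) hN
    _ = 2 * N * max |f m| |f M| := by ring

end
end

section
/- For the potential v(x) = {x} (the fractional part), any irrational α, and any λ > 0, the Lyapunov exponent satisfies γ(E) ≥ max{0, ln(λ/(2e))} for every E ∈ ℝ. -/
/-!
The entry `(0,0)` of `M_n(x,E)` is the determinant of the `n × n` Jacobi matrix `J(x)` with
off-diagonal entries `1` and diagonal `E - λ{x + iα}` (`transferMat_eq_det`), so `log ‖M_n‖` is at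
least `∑ₖ log |F_k(x)|`, where the `F_k(x)` are the eigenvalues of `J(x)`.

The heart of the proof is a Wegner-type bound with the sharp constant: for `0 ≤ u ≤ λ/2`, the
average over `x` of the number of eigenvalues of `J(x)` in `(-u, u)` is at most `2nu/λ`
(`integral_negCount_sub_le`). Put `ε = 2u/λ`. Replacing `x` by `x + ε` lowers every diagonal entry
by exactly `2u`, except at the sites where the fractional part wraps around. A change of the
diagonal on a set `S` of sites changes the number of eigenvalues below a level by at most `#S`
(`negCount_le`), so the number of eigenvalues of `J(x)` below `u` exceeds the number of
eigenvalues of `J(x + ε)` below `-u` by at most the number of wrapped sites. Integrating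
over a period, translation invariance and the fact that each site wraps with probability `ε` give
the bound `nε`.

With `c = λ/2`, `∑ₖ log (c / |F_k|) ≤ ∫₀ᶜ #{k : |F_k| < u} du/u`; integrating in `x` and exchanging
the integrals gives at most `∫₀ᶜ (2n/λ) du = n`. Hence `∫ log ‖M_n‖ ≥ n (log (λ/2) - 1)` for every
`n`, which is `n log (λ/(2e))`. Nonnegativity follows from `det M_n = 1`.
-/

open MeasureTheory Filter

noncomputable section

/-- The `n`-step transfer matrix `M_n(x,E) = ∏_{l=n-1}^{0} [[E - λ v(x + lα), -1],[1, 0]]`. -/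
noncomputable def transferMat (lam : ℝ) (v : ℝ → ℝ) (α E x : ℝ) :
    ℕ → Matrix (Fin 2) (Fin 2) ℝ
  | 0 => 1
  | n + 1 => !![E - lam * v (x + (n : ℝ) * α), -1; 1, 0] * transferMat lam v α E x n

/-- A norm on 2×2 real matrices (Frobenius/Hilbert-Schmidt norm). -/
noncomputable def matNorm (M : Matrix (Fin 2) (Fin 2) ℝ) : ℝ :=
  Real.sqrt (∑ i, ∑ j, (M i j) ^ 2)

/-- The Lyapunov exponent `γ(E) = inf_{n ≥ 1} (1/n) ∫₀¹ ln ‖M_n(x,E)‖ dx`. -/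
noncomputable def lyap (lam : ℝ) (v : ℝ → ℝ) (α E : ℝ) : ℝ :=
  ⨅ n : ℕ+, (1 / (n : ℝ)) *
    ∫ x in (0:ℝ)..1, Real.log (matNorm (transferMat lam v α E x (n : ℕ)))



/-! ### Eigenvalue counting for Jacobi matrices -/

/-- The Jacobi (symmetric tridiagonal) matrix with diagonal `a` and off-diagonal entries `1`. -/
def jac (n : ℕ) (a : Fin n → ℝ) : Matrix (Fin n) (Fin n) ℝ :=
  Matrix.diagonal a + Matrix.of fun i j : Fin n =>
    if (i : ℕ) + 1 = j ∨ (j : ℕ) + 1 = i then (1 : ℝ) else 0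

lemma jac_isHermitian (n : ℕ) (a : Fin n → ℝ) : (jac n a).IsHermitian := by
  ext i j
  by_cases h : i = j
  · simp [h]
  · simp [jac, or_comm, h, Ne.symm h]

/-- The number of eigenvalues, with multiplicity, of `jac n a` that are strictly below `t`. -/
def negCount (n : ℕ) (t : ℝ) (a : Fin n → ℝ) : ℕ :=
  (Finset.univ.filter fun k => (jac_isHermitian n a).eigenvalues k < t).card

/-- The spectral theorem in terms of quadratic forms: an orthogonal change of variables
diagonalizes `⟨v, A v⟩ - t ⟨v, v⟩`. -/
lemma exists_diagonalization {n : ℕ} {A : Matrix (Fin n) (Fin n) ℝ} (hA : A.IsHermitian) :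
    ∃ U : Matrix (Fin n) (Fin n) ℝ, U.transpose * U = 1 ∧ ∀ (t : ℝ) (v : Fin n → ℝ),
      v ⬝ᵥ A.mulVec v - t * (v ⬝ᵥ v) =
        ∑ k, (hA.eigenvalues k - t) * (U.transpose.mulVec v k) ^ 2 := by
  have hU := Unitary.coe_star_mul_self hA.eigenvectorUnitary
  have hU' := Unitary.coe_mul_star_self hA.eigenvectorUnitary
  have hs := hA.spectral_theorem
  set U : Matrix (Fin n) (Fin n) ℝ := (hA.eigenvectorUnitary : Matrix (Fin n) (Fin n) ℝ) with hUd
  have hst : star U = U.transpose := by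
    rw [Matrix.star_eq_conjTranspose]; exact Matrix.conjTranspose_eq_transpose_of_trivial U
  rw [hst] at hU
  replace hU' : U * U.transpose = 1 := by rw [← hst]; exact hU'
  refine ⟨U, hU, fun t v => ?_⟩
  have hA' : A = U * Matrix.diagonal hA.eigenvalues * U.transpose := by
    conv_lhs => rw [hs]
    rw [Unitary.conjStarAlgAut_apply]
    simp only [← hUd, hst]
    rfl
  have h1 : v ⬝ᵥ A.mulVec v = ∑ k, hA.eigenvalues k * (U.transpose.mulVec v k) ^ 2 := by
    conv_lhs => rw [hA']
    rw [← Matrix.mulVec_mulVec, ← Matrix.mulVec_mulVec, Matrix.dotProduct_mulVec,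
      ← Matrix.mulVec_transpose]
    simp only [dotProduct, Matrix.mulVec_diagonal]
    exact Finset.sum_congr rfl fun k _ => by ring
  have h2 : v ⬝ᵥ v = ∑ k, (U.transpose.mulVec v k) ^ 2 := by
    have : v = U.mulVec (U.transpose.mulVec v) := by rw [Matrix.mulVec_mulVec, hU', Matrix.one_mulVec]
    conv_lhs => rhs; rw [this]
    rw [Matrix.dotProduct_mulVec, ← Matrix.mulVec_transpose]
    simp only [dotProduct]
    exact Finset.sum_congr rfl fun k _ => by ring
  rw [h1, h2, Finset.mul_sum, ← Finset.sum_sub_distrib]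
  exact Finset.sum_congr rfl fun k _ => by ring

/-- Finite-rank perturbation bound: if `jac n a - t ≤ jac n b - s` as quadratic forms on vectors
vanishing on `S`, then `jac n b` has at most `#S` more eigenvalues below `s` than `jac n a` has
below `t`. -/
lemma negCount_le {n : ℕ} {s t : ℝ} {a b : Fin n → ℝ} (S : Finset (Fin n))
    (h : ∀ i ∉ S, a i - t ≤ b i - s) : negCount n s b ≤ negCount n t a + S.card := by
  classical
  obtain ⟨U, hU, hUq⟩ := exists_diagonalization (jac_isHermitian n a)
  obtain ⟨V, hV, hVq⟩ := exists_diagonalization (jac_isHermitian n b)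
  set F := (jac_isHermitian n a).eigenvalues
  set G := (jac_isHermitian n b).eigenvalues
  let B := Finset.univ.filter fun k => G k < s
  let A := Finset.univ.filter fun k => F k < t
  -- `L` takes a combination of the eigenvectors of `jac n b` below `s` to its components along the
  -- eigenvectors of `jac n a` below `t` and to its values on `S`. On the kernel of `L` the form of
  -- `jac n b - s` is both nonnegative and negative definite, so `L` is injective.
  let ι : (B → ℝ) →ₗ[ℝ] (Fin n → ℝ) :=
    LinearMap.pi fun k => if hk : k ∈ B then LinearMap.proj (⟨k, hk⟩ : B) else 0
  let L : (B → ℝ) →ₗ[ℝ] (A → ℝ) × (S → ℝ) :=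
    ((LinearMap.funLeft ℝ ℝ (fun k : A => (k : Fin n)) ∘ₗ U.transpose.mulVecLin).prod
      (LinearMap.funLeft ℝ ℝ (fun k : S => (k : Fin n)))) ∘ₗ V.mulVecLin ∘ₗ ι
  have hL : Function.Injective L := by
    rw [injective_iff_map_eq_zero]
    intro c hc
    set v : Fin n → ℝ := V.mulVec (ι c) with hv
    have hcA : ∀ k, F k < t → U.transpose.mulVec v k = 0 := fun k hk =>
      congrFun (congrArg Prod.fst hc) (⟨k, by simp [A, hk]⟩ : A)
    have hcS : ∀ i ∈ S, v i = 0 := fun i hi =>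
      congrFun (congrArg Prod.snd hc) (⟨i, hi⟩ : S)
    have hVv : V.transpose.mulVec v = ι c := by
      rw [hv, Matrix.mulVec_mulVec, hV, Matrix.one_mulVec]
    have h1 : 0 ≤ v ⬝ᵥ (jac n a).mulVec v - t * (v ⬝ᵥ v) := by
      rw [hUq]
      refine Finset.sum_nonneg fun k _ => ?_
      by_cases hk : F k < t
      · simp [hcA k hk]
      · exact mul_nonneg (by linarith) (sq_nonneg _)
    have h2 : v ⬝ᵥ (jac n a).mulVec v - t * (v ⬝ᵥ v) ≤
        v ⬝ᵥ (jac n b).mulVec v - s * (v ⬝ᵥ v) := by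
      have : ∑ i, (a i - t) * v i ^ 2 ≤ ∑ i, (b i - s) * v i ^ 2 := by
        refine Finset.sum_le_sum fun i _ => ?_
        by_cases hi : i ∈ S
        · simp [hcS i hi]
        · exact mul_le_mul_of_nonneg_right (h i hi) (sq_nonneg _)
      have hd : ∀ (w : Fin n → ℝ) (r : ℝ), v ⬝ᵥ (Matrix.diagonal w).mulVec v - r * (v ⬝ᵥ v)
          = ∑ i, (w i - r) * v i ^ 2 := by
        intro w r
        simp only [dotProduct, Matrix.mulVec_diagonal, Finset.mul_sum, ← Finset.sum_sub_distrib]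
        exact Finset.sum_congr rfl fun k _ => by ring
      rw [← hd, ← hd] at this
      simp only [jac, Matrix.add_mulVec, dotProduct_add]
      linarith
    rw [hVq, hVv] at h2
    have hterm : ∀ k ∈ Finset.univ, (G k - s) * (ι c k) ^ 2 ≤ 0 := by
      intro k _
      by_cases hk : k ∈ B
      · have : G k < s := by simpa [B] using hk
        exact mul_nonpos_of_nonpos_of_nonneg (by linarith) (sq_nonneg _)
      · simp [ι, hk]
    have hz := (Finset.sum_eq_zero_iff_of_nonpos hterm).1
      (le_antisymm (Finset.sum_nonpos hterm) (h1.trans h2))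
    ext ⟨k, hk⟩
    have hk' : G k < s := by simpa [B] using hk
    have := hz k (Finset.mem_univ _)
    simp only [ι, LinearMap.pi_apply, hk, dif_pos, LinearMap.proj_apply] at this
    rcases mul_eq_zero.1 this with h0 | h0
    · linarith
    · simpa using h0
  have := LinearMap.finrank_le_finrank_of_injective hL
  simp only [Module.finrank_prod, Module.finrank_fintype_fun_eq_card, Fintype.card_coe] at this
  exact this

/-- Lower semicontinuity of `negCount`, which gives its measurability. -/
lemma isOpen_negCount (n k : ℕ) : IsOpen {p : ℝ × (Fin n → ℝ) | k ≤ negCount n p.1 p.2} := by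
  rw [Metric.isOpen_iff]
  rintro ⟨t, a⟩ hk
  obtain ⟨δ, hδ, hδ'⟩ : ∃ δ > 0, ∀ k, (jac_isHermitian n a).eigenvalues k < t →
      (jac_isHermitian n a).eigenvalues k < t - δ := by
    have : ∀ᶠ δ in nhdsWithin (0 : ℝ) (Set.Ioi 0), ∀ k, (jac_isHermitian n a).eigenvalues k < t →
      (jac_isHermitian n a).eigenvalues k < t - δ := by
      rw [Filter.eventually_all]
      intro k
      rw [Filter.eventually_imp_distrib_left]
      intro hk
      filter_upwards [Ioo_mem_nhdsGT (sub_pos.2 hk)] with δ hδ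
      linarith [hδ.2]
    obtain ⟨δ, h1, h2⟩ := (this.and self_mem_nhdsWithin).exists
    exact ⟨δ, h2, h1⟩
  refine ⟨δ / 2, by positivity, ?_⟩
  rintro ⟨t', a'⟩ hp
  have hk0 : k ≤ negCount n t a := hk
  have h1 : negCount n t a ≤ negCount n (t - δ) a :=
    Finset.card_le_card fun k => by simpa using hδ' k
  have h2 : negCount n (t - δ) a ≤ negCount n t' a' + (∅ : Finset (Fin n)).card := by
    refine negCount_le ∅ fun i _ => ?_
    rw [Metric.mem_ball, Prod.dist_eq, max_lt_iff] at hp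
    have h3 := abs_lt.1 (Real.dist_eq t' t ▸ hp.1)
    have h4 := abs_lt.1 (Real.dist_eq _ _ ▸ (dist_le_pi_dist a' a i).trans_lt hp.2)
    linarith [h3.1, h4.2]
  simp at h2
  exact hk0.trans (h1.trans h2)

lemma measurable_negCount (n : ℕ) :
    Measurable fun p : ℝ × (Fin n → ℝ) => negCount n p.1 p.2 :=
  measurable_of_Ici fun k => (isOpen_negCount n k).measurableSet

/-! ### The transfer matrix and the Jacobi determinant -/

/-- The three-term recurrence, by expansion along the first row and then the first column. -/
lemma det_jac_succ_succ (n : ℕ) (a : Fin (n + 2) → ℝ) :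
    (jac (n + 2) a).det =
      a 0 * (jac (n + 1) fun i => a i.succ).det - (jac n fun i => a i.succ.succ).det := by
  have h1 : (jac (n + 2) a).submatrix Fin.succ (Fin.succAbove 0) = jac (n + 1) fun i => a i.succ := by
    ext i j; simp [jac, Matrix.diagonal_apply]
  have h2 : ((jac (n + 2) a).submatrix Fin.succ (Fin.succAbove 1)).det =
      (jac n fun i => a i.succ.succ).det := by
    rw [Matrix.det_succ_column_zero, Fin.sum_univ_succ, Finset.sum_eq_zero]
    · have : ((jac (n + 2) a).submatrix Fin.succ (Fin.succAbove 1)).submatrix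
          (Fin.succAbove 0) Fin.succ = jac n fun i => a i.succ.succ := by
        ext i j
        have : (1 : Fin (n + 2)).succAbove j.succ = j.succ.succ := by
          rw [← Fin.succ_zero_eq_one, Fin.succ_succAbove_succ]; simp
        simp [jac, Matrix.diagonal_apply, this]
      rw [this]
      simp [jac]
    · intro i _
      simp [jac]
  rw [Matrix.det_succ_row_zero, Fin.sum_univ_succ, Fin.sum_univ_succ, Finset.sum_eq_zero]
  · rw [h1]
    have : (Fin.succ 0 : Fin (n+2)) = 1 := rfl
    rw [this, h2]
    simp [jac]
    ring
  · intro i _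
    simp [jac, Fin.ext_iff]

/-- Peeling off the rightmost factor, where the definition peels off the leftmost one. -/
lemma transferMat_succ' (lam : ℝ) (v : ℝ → ℝ) (α E x : ℝ) (n : ℕ) :
    transferMat lam v α E x (n + 1) =
      transferMat lam v α E (x + α) n * !![E - lam * v x, -1; 1, 0] := by
  induction n with
  | zero => simp [transferMat]
  | succ n ih =>
    rw [transferMat, ih, transferMat, Matrix.mul_assoc]
    congr 5
    push_cast; ring_nf

/-- Two consecutive values of `n` are carried together because the recurrence has order two. -/
lemma transferMat_eq_det (lam : ℝ) (v : ℝ → ℝ) (α E : ℝ) (n : ℕ) : ∀ x,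
    transferMat lam v α E x n 0 0 = (jac n fun i => E - lam * v (x + (i : ℕ) * α)).det ∧
    transferMat lam v α E x (n + 1) 0 0 =
      (jac (n + 1) fun i => E - lam * v (x + (i : ℕ) * α)).det := by
  induction n with
  | zero => intro x; simp [transferMat, jac]
  | succ n ih =>
    intro x
    refine ⟨(ih x).2, ?_⟩
    rw [transferMat_succ', det_jac_succ_succ]
    have e1 : transferMat lam v α E (x + α) (n + 1) 0 1 =
        - transferMat lam v α E (x + α + α) n 0 0 := by
      rw [transferMat_succ']; simp [Matrix.mul_apply, Fin.sum_univ_two]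
    simp only [Matrix.mul_apply, Fin.sum_univ_two]
    rw [e1, (ih _).1, (ih _).2]
    have e2 : ∀ m : ℕ, x + α + (m : ℝ) * α = x + ((m + 1 : ℕ) : ℝ) * α := by
      intro m; push_cast; ring
    have e3 : ∀ m : ℕ, x + α + α + (m : ℝ) * α = x + ((m + 1 + 1 : ℕ) : ℝ) * α := by
      intro m; push_cast; ring
    simp [e2, e3, -Nat.cast_add]
    ring

/-! ### The averaged eigenvalue count -/

-- Otherwise unification unfolds the eigenvalues behind `negCount`.
attribute [irreducible] negCount

/-- The diagonal `E - λ {x + iα}`, `0 ≤ i < n`, of the Jacobi matrix attached to `M_n(x,E)`. -/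
def diagSeq (n : ℕ) (lam α E x : ℝ) : Fin n → ℝ :=
  fun i => E - lam * Int.fract (x + (i : ℕ) * α)

lemma measurable_negCount_diagSeq (n : ℕ) (lam α E : ℝ) :
    Measurable fun p : ℝ × ℝ => (negCount n p.2 (diagSeq n lam α E p.1) : ℝ) := by
  have h : Measurable fun p : ℝ × ℝ => (p.2, diagSeq n lam α E p.1) := by
    refine measurable_snd.prodMk (measurable_pi_lambda _ fun i => ?_)
    simp only [diagSeq]
    fun_prop
  have h' : Measurable fun p : ℝ × ℝ => negCount n p.2 (diagSeq n lam α E p.1) :=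
    Measurable.comp (g := fun p : ℝ × (Fin n → ℝ) => negCount n p.1 p.2)
      (measurable_negCount n) h
  exact measurable_from_nat.comp h'

lemma negCount_le_card (n : ℕ) (t : ℝ) (a : Fin n → ℝ) : negCount n t a ≤ n := by
  rw [negCount]
  exact (Finset.card_filter_le _ _).trans (by simp)

lemma negCount_mono (n : ℕ) {s t : ℝ} (h : s ≤ t) (a : Fin n → ℝ) :
    negCount n s a ≤ negCount n t a := by
  simpa using negCount_le (a := a) (b := a) (s := s) (t := t) ∅ (fun i _ => by linarith)

lemma intervalIntegrable_negCount (n : ℕ) (lam α E t y : ℝ) :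
    IntervalIntegrable (fun x => (negCount n t (diagSeq n lam α E (x + y)) : ℝ)) volume 0 1 := by
  rw [intervalIntegrable_iff]
  refine Measure.integrableOn_of_bounded (M := n) (by simp) ?_ ?_
  · exact ((measurable_negCount_diagSeq n lam α E).comp
      ((measurable_id.add_const y).prodMk measurable_const)).aestronglyMeasurable
  · filter_upwards with x
    simpa using negCount_le_card n t _

lemma integral_fract_shift (f : ℝ → ℝ) (c : ℝ) :
    ∫ x in (0 : ℝ)..1, f (Int.fract (x + c)) = ∫ x in (0 : ℝ)..1, f (Int.fract x) := by
  have hp : Function.Periodic (fun x => f (Int.fract x)) 1 := fun x => by simp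
  rw [intervalIntegral.integral_comp_add_right (fun x => f (Int.fract x))]
  simpa [add_comm] using hp.intervalIntegral_add_eq c 0

/-- A shift by `ε` carries `{x + c}` past `1` for a set of `x` of measure `ε`. -/
lemma integral_wrap {ε : ℝ} (h0 : 0 ≤ ε) (h1 : ε ≤ 1) (c : ℝ) :
    ∫ x in (0 : ℝ)..1, (if 1 - ε ≤ Int.fract (x + c) then (1 : ℝ) else 0) = ε := by
  rw [integral_fract_shift (fun y => if 1 - ε ≤ y then (1 : ℝ) else 0) c,
    intervalIntegral.integral_of_le zero_le_one, integral_Ioc_eq_integral_Ioo]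
  have : ∀ x ∈ Set.Ioo (0 : ℝ) 1, (if 1 - ε ≤ Int.fract x then (1 : ℝ) else 0) =
      (Set.Ici (1 - ε)).indicator 1 x := by
    intro x hx
    rw [Int.fract_eq_self.2 ⟨hx.1.le, hx.2⟩]
    simp [Set.indicator_apply]
  rw [setIntegral_congr_fun measurableSet_Ioo this, integral_indicator_one measurableSet_Ici,
    measureReal_def, Measure.restrict_apply measurableSet_Ici, ← measureReal_def]
  refine le_antisymm ?_ ?_
  · calc volume.real (Set.Ici (1 - ε) ∩ Set.Ioo 0 1) ≤ volume.real (Set.Ico (1 - ε) 1) :=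
          measureReal_mono (fun x hx => ⟨hx.1, hx.2.2⟩) (by simp)
      _ = ε := by simp [h0]
  · calc ε = volume.real (Set.Ioo (1 - ε) 1) := by simp [h0]
      _ ≤ volume.real (Set.Ici (1 - ε) ∩ Set.Ioo 0 1) := measureReal_mono (fun x hx => ⟨hx.1.le, by linarith [hx.1], hx.2⟩)
          (measure_ne_top_of_subset Set.inter_subset_right (by simp))

lemma intervalIntegrable_wrap (ε c : ℝ) :
    IntervalIntegrable (fun x => if 1 - ε ≤ Int.fract (x + c) then (1 : ℝ) else 0) volume 0 1 := by
  rw [intervalIntegrable_iff]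
  refine Measure.integrableOn_of_bounded (M := 1) (by simp) ?_ ?_
  · exact (Measurable.ite (measurableSet_le (by fun_prop) (by fun_prop)) measurable_const
      measurable_const).aestronglyMeasurable
  · filter_upwards with x
    split_ifs <;> simp

/-- The Wegner-type bound: for `0 ≤ u ≤ λ/2` the mean number of eigenvalues in `[-u, u)` is at most
`2nu/λ`. -/
lemma integral_negCount_sub_le (n : ℕ) {lam u : ℝ} (α E : ℝ) (hlam : 0 < lam) (hu : 0 ≤ u)
    (hu' : u ≤ lam / 2) :
    ∫ x in (0 : ℝ)..1, ((negCount n u (diagSeq n lam α E x) : ℝ) -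
      negCount n (-u) (diagSeq n lam α E x)) ≤ n * (2 * u / lam) := by
  set ε := 2 * u / lam with hε
  have hε0 : 0 ≤ ε := by positivity
  have hε1 : ε ≤ 1 := by rw [hε, div_le_one hlam]; linarith
  have hlε : lam * ε = 2 * u := by rw [hε]; field_simp
  have hpt : ∀ x, (negCount n u (diagSeq n lam α E x) : ℝ) ≤
      negCount n (-u) (diagSeq n lam α E (x + ε)) +
        ∑ i : Fin n, if 1 - ε ≤ Int.fract (x + (i : ℕ) * α) then (1 : ℝ) else 0 := by
    intro x
    have := negCount_le (n := n) (s := u) (t := -u) (a := diagSeq n lam α E (x + ε))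
      (b := diagSeq n lam α E x)
      (Finset.univ.filter fun i : Fin n => 1 - ε ≤ Int.fract (x + (i : ℕ) * α)) (by
        intro i hi
        simp only [Finset.mem_filter, Finset.mem_univ, true_and, not_le] at hi
        have hf : Int.fract (x + ε + (i : ℕ) * α) = Int.fract (x + (i : ℕ) * α) + ε := by
          rw [Int.fract_eq_iff]
          refine ⟨by linarith [Int.fract_nonneg (x + (i : ℕ) * α)], by linarith,
            ⌊x + (i : ℕ) * α⌋, ?_⟩
          rw [Int.fract]; ring
        simp only [diagSeq, hf]
        nlinarith)
    have h2 : ((negCount n u (diagSeq n lam α E x) : ℕ) : ℝ) ≤ _ := Nat.cast_le.2 this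
    simpa using h2
  have hper : ∫ x in (0 : ℝ)..1, (negCount n (-u) (diagSeq n lam α E (x + ε)) : ℝ) =
      ∫ x in (0 : ℝ)..1, (negCount n (-u) (diagSeq n lam α E x) : ℝ) := by
    have hp : Function.Periodic (fun x => (negCount n (-u) (diagSeq n lam α E x) : ℝ)) 1 := by
      intro x
      have : diagSeq n lam α E (x + 1) = diagSeq n lam α E x := by
        ext i
        simp only [diagSeq]
        rw [show x + 1 + (i : ℕ) * α = x + (i : ℕ) * α + 1 by ring, Int.fract_add_one]
      simp only [this]
    rw [intervalIntegral.integral_comp_add_right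
      (fun x => (negCount n (-u) (diagSeq n lam α E x) : ℝ))]
    simpa [add_comm] using hp.intervalIntegral_add_eq ε 0
  have hi1 := intervalIntegrable_negCount n lam α E u 0
  have hi2 := intervalIntegrable_negCount n lam α E (-u) 0
  simp only [add_zero] at hi1 hi2
  have hi3 := intervalIntegrable_negCount n lam α E (-u) ε
  have hi4 : IntervalIntegrable (fun x => ∑ i : Fin n,
      if 1 - ε ≤ Int.fract (x + (i : ℕ) * α) then (1 : ℝ) else 0) volume 0 1 :=
    by
      have := IntervalIntegrable.sum (μ := volume) (a := 0) (b := 1) Finset.univ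
        (fun (i : Fin n) _ => intervalIntegrable_wrap ε ((i : ℕ) * α))
      simpa only [Finset.sum_fn] using this
  have hle := intervalIntegral.integral_mono zero_le_one hi1 (hi3.add hi4) hpt
  rw [intervalIntegral.integral_add hi3 hi4, hper, intervalIntegral.integral_finsetSum
    (fun i _ => intervalIntegrable_wrap ε _)] at hle
  simp only [integral_wrap hε0 hε1] at hle
  rw [intervalIntegral.integral_sub hi1 hi2]
  simp at hle
  linarith

/-! ### From eigenvalue counts to the logarithm -/

/-- A lower bound for `∫₀ᶜ 1[|s| < u] du/u`, which equals `log⁺ (c / |s|)` and is infinite when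
`s = 0`; the auxiliary `s'` allows `s = 0`, where `Real.log` has a junk value. -/
lemma log_le_lintegral {c s s' : ℝ} (hc0 : 0 < c) (hs : |s| ≤ s') (hs' : 0 < s') :
    ENNReal.ofReal (Real.log c - Real.log s') ≤
      ∫⁻ u in Set.Ioo 0 c, if |s| < u then ENNReal.ofReal u⁻¹ else 0 := by
  rcases le_or_gt c s' with hc | hc
  · have : Real.log c - Real.log s' ≤ 0 := sub_nonpos.2 (Real.log_le_log hc0 hc)
    simp [ENNReal.ofReal_of_nonpos this]
  · have hint : ∫ u in Set.Ioo s' c, u⁻¹ = Real.log c - Real.log s' := by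
      rw [← integral_Ioc_eq_integral_Ioo, ← intervalIntegral.integral_of_le hc.le,
        integral_inv_of_pos hs' (hs'.trans hc), Real.log_div (hs'.trans hc).ne' hs'.ne']
    have hii : IntegrableOn (fun u : ℝ => u⁻¹) (Set.Ioo s' c) := by
      refine ContinuousOn.integrableOn_Icc (a := s') (b := c) ?_ |>.mono_set Set.Ioo_subset_Icc_self
      exact continuousOn_inv₀.mono fun x hx => (hs'.trans_le hx.1).ne'
    rw [← hint, ofReal_integral_eq_lintegral_ofReal hii]
    · calc _ = ∫⁻ u in Set.Ioo s' c, if |s| < u then ENNReal.ofReal u⁻¹ else 0 :=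
            setLIntegral_congr_fun measurableSet_Ioo fun u hu => by
              simp [hs.trans_lt hu.1]
        _ ≤ _ := lintegral_mono_set (Set.Ioo_subset_Ioo_left hs'.le)
    · filter_upwards [ae_restrict_mem measurableSet_Ioo] with u hu
      exact inv_nonneg.2 (hs'.trans hu.1).le


lemma card_abs_lt_le (n : ℕ) {u : ℝ} (hu : 0 < u) (a : Fin n → ℝ) :
    ((Finset.univ.filter fun k => |(jac_isHermitian n a).eigenvalues k| < u).card : ℝ) ≤
      negCount n u a - negCount n (-u) a := by
  have h : (Finset.univ.filter fun k => |(jac_isHermitian n a).eigenvalues k| < u).card +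
      negCount n (-u) a ≤ negCount n u a := by
    rw [negCount, negCount, ← Finset.card_union_of_disjoint]
    · refine Finset.card_le_card fun k => ?_
      simp only [Finset.mem_union, Finset.mem_filter, Finset.mem_univ, true_and]
      rintro (h | h)
      · exact (abs_lt.1 h).2
      · linarith
    · rw [Finset.disjoint_filter]
      intro k _ h1 h2
      linarith [(abs_lt.1 h1).1]
  have h' : (((Finset.univ.filter fun k => |(jac_isHermitian n a).eigenvalues k| < u).card +
      negCount n (-u) a : ℕ) : ℝ) ≤ negCount n u a := Nat.cast_le.2 h
  push_cast at h'
  linarith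

lemma det_transferMat (lam : ℝ) (v : ℝ → ℝ) (α E x : ℝ) (n : ℕ) :
    (transferMat lam v α E x n).det = 1 := by
  induction n with
  | zero => simp [transferMat]
  | succ n ih => rw [transferMat, Matrix.det_mul, ih]; simp [Matrix.det_fin_two]

lemma one_le_matNorm (lam : ℝ) (v : ℝ → ℝ) (α E x : ℝ) (n : ℕ) :
    1 ≤ matNorm (transferMat lam v α E x n) := by
  have h := det_transferMat lam v α E x n
  set M := transferMat lam v α E x n
  rw [Matrix.det_fin_two] at h
  rw [matNorm, Real.one_le_sqrt]
  simp only [Fin.sum_univ_two]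
  nlinarith [sq_nonneg (M 0 0 - M 1 1), sq_nonneg (M 0 1 + M 1 0)]

lemma abs_entry_le_matNorm (M : Matrix (Fin 2) (Fin 2) ℝ) : |M 0 0| ≤ matNorm M := by
  rw [matNorm]
  refine Real.abs_le_sqrt ?_
  simp only [Fin.sum_univ_two]
  nlinarith [sq_nonneg (M 0 1), sq_nonneg (M 1 0), sq_nonneg (M 1 1)]

lemma integrable_log_matNorm (lam α E : ℝ) (n : ℕ) :
    IntegrableOn (fun x => Real.log (matNorm (transferMat lam Int.fract α E x n)))
      (Set.Ioc 0 1) := by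
  have hm : ∀ (n : ℕ) i j, Measurable fun x => transferMat lam Int.fract α E x n i j := by
    intro n
    induction n with
    | zero => intro i j; simp [transferMat]
    | succ n ih =>
      have h0 := ih 0
      have h1 := ih 1
      intro i j
      fin_cases i <;>
        simp [transferMat, Matrix.mul_apply, Fin.sum_univ_two] <;> fun_prop
  have hb : ∀ (n : ℕ) x i j, |transferMat lam Int.fract α E x n i j| ≤ (|E| + |lam| + 1) ^ n := by
    intro n x
    induction n with
    | zero =>
      intro i j
      fin_cases i <;> fin_cases j <;> simp [transferMat]
    | succ n ih =>
      have hK : (0 : ℝ) ≤ (|E| + |lam| + 1) ^ n := by positivity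
      have hv : |E - lam * Int.fract (x + n * α)| ≤ |E| + |lam| := by
        refine (abs_sub _ _).trans ?_
        rw [abs_mul]
        have : |Int.fract (x + n * α)| ≤ 1 := by
          rw [abs_of_nonneg (Int.fract_nonneg _)]; exact (Int.fract_lt_one _).le
        nlinarith [abs_nonneg lam]
      intro i j
      have h0 := ih 0 j
      have h1 := ih 1 j
      fin_cases i
      · simp only [transferMat, Matrix.mul_apply, Fin.sum_univ_two]
        simp
        refine (abs_add_le _ _).trans ?_
        rw [abs_mul, abs_neg, pow_succ]
        have := mul_le_mul hv h0 (abs_nonneg _) (by positivity)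
        nlinarith
      · simp only [transferMat, Matrix.mul_apply, Fin.sum_univ_two]
        simp
        rw [pow_succ]
        nlinarith [abs_nonneg E, abs_nonneg lam]
  refine Measure.integrableOn_of_bounded (M := 2 * (|E| + |lam| + 1) ^ n) (by simp) ?_ ?_
  · refine (Real.measurable_log.comp (Measurable.sqrt ?_)).aestronglyMeasurable
    exact Finset.measurable_sum _ fun i _ => Finset.measurable_sum _ fun j _ => (hm n i j).pow_const 2
  · filter_upwards with x
    have h1 := one_le_matNorm lam Int.fract α E x n
    rw [Real.norm_of_nonneg (Real.log_nonneg h1)]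
    refine (Real.log_le_self (by linarith)).trans ?_
    rw [matNorm]
    refine Real.sqrt_le_iff.2 ⟨by positivity, ?_⟩
    have hsq : ∀ i j, (transferMat lam Int.fract α E x n i j) ^ 2 ≤ ((|E| + |lam| + 1) ^ n) ^ 2 :=
      fun i j => sq_le_sq' (abs_le.1 (hb n x i j)).1 (abs_le.1 (hb n x i j)).2
    simp only [Fin.sum_univ_two]
    nlinarith [hsq 0 0, hsq 0 1, hsq 1 0, hsq 1 1]

/-- If no eigenvalue vanishes, this is the sum over the eigenvalues of `log_le_lintegral`, since
`‖M_n‖ ≥ |∏ₖ F_k|`. If one of them does, the right-hand side is infinite. -/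
lemma log_matNorm_ge (n : ℕ) {lam c : ℝ} (α E x : ℝ) (hc : 0 < c) :
    ENNReal.ofReal (n * Real.log c - Real.log (matNorm (transferMat lam Int.fract α E x n))) ≤
      ∫⁻ u in Set.Ioo 0 c, ENNReal.ofReal (((negCount n u (diagSeq n lam α E x) : ℝ) -
        negCount n (-u) (diagSeq n lam α E x)) / u) := by
  set F := (jac_isHermitian n (diagSeq n lam α E x)).eigenvalues with hF
  set R := n * Real.log c - Real.log (matNorm (transferMat lam Int.fract α E x n)) with hR
  have hsum : ∑ k, ∫⁻ u in Set.Ioo 0 c, (if |F k| < u then ENNReal.ofReal u⁻¹ else 0) ≤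
      ∫⁻ u in Set.Ioo 0 c, ENNReal.ofReal (((negCount n u (diagSeq n lam α E x) : ℝ) -
        negCount n (-u) (diagSeq n lam α E x)) / u) := by
    rw [← lintegral_finsetSum]
    · refine setLIntegral_mono_ae' measurableSet_Ioo (Filter.Eventually.of_forall fun u hu => ?_)
      rw [← Finset.sum_filter, Finset.sum_const, nsmul_eq_mul, ← ENNReal.ofReal_natCast,
        ← ENNReal.ofReal_mul (by positivity), ← div_eq_mul_inv]
      exact ENNReal.ofReal_le_ofReal
        (div_le_div_of_nonneg_right (card_abs_lt_le n hu.1 _) hu.1.le)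
    · intro k _
      exact Measurable.ite (measurableSet_lt measurable_const measurable_id)
        (by fun_prop) measurable_const
  refine le_trans ?_ hsum
  by_cases hz : ∃ k, F k = 0
  · obtain ⟨k, hk⟩ := hz
    refine le_trans ?_ (Finset.single_le_sum (fun _ _ => zero_le) (Finset.mem_univ k))
    -- For `F k = 0` the level `s'` is free; this choice makes `log c - log s' = R`.
    have := log_le_lintegral (s := F k) (s' := Real.exp (Real.log c - R)) hc
      (by rw [hk, abs_zero]; positivity) (Real.exp_pos _)
    rwa [Real.log_exp, sub_sub_cancel] at this
  · push Not at hz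
    have hdet : transferMat lam Int.fract α E x n 0 0 = ∏ k, F k := by
      rw [(transferMat_eq_det lam Int.fract α E n x).1]
      exact (jac_isHermitian n (diagSeq n lam α E x)).det_eq_prod_eigenvalues
    have hlog : ∑ k, Real.log |F k| ≤ Real.log (matNorm (transferMat lam Int.fract α E x n)) := by
      rw [← Real.log_prod (fun k _ => abs_ne_zero.2 (hz k)), ← Finset.abs_prod, ← hdet]
      refine Real.log_le_log ?_ (abs_entry_le_matNorm _)
      rw [hdet]
      exact abs_pos.2 (Finset.prod_ne_zero_iff.2 fun k _ => hz k)
    calc ENNReal.ofReal R ≤ ENNReal.ofReal (∑ k, max (Real.log c - Real.log |F k|) 0) := by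
          refine ENNReal.ofReal_le_ofReal ?_
          calc R ≤ ∑ k, (Real.log c - Real.log |F k|) := by
                rw [Finset.sum_sub_distrib, Finset.sum_const, Finset.card_univ, Fintype.card_fin,
                  nsmul_eq_mul]
                exact sub_le_sub_left hlog _
            _ ≤ _ := Finset.sum_le_sum fun k _ => le_max_left _ _
      _ = ∑ k, ENNReal.ofReal (Real.log c - Real.log |F k|) := by
          rw [ENNReal.ofReal_sum_of_nonneg fun k _ => le_max_right _ _]
          simp [ENNReal.ofReal_max]
      _ ≤ _ := Finset.sum_le_sum fun k _ =>
          log_le_lintegral hc le_rfl (abs_pos.2 (hz k))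

lemma lintegral_count_le (n : ℕ) {lam : ℝ} (α E : ℝ) (hlam : 0 < lam) :
    ∫⁻ x in Set.Ioc (0 : ℝ) 1, ∫⁻ u in Set.Ioo 0 (lam / 2),
      ENNReal.ofReal (((negCount n u (diagSeq n lam α E x) : ℝ) -
        negCount n (-u) (diagSeq n lam α E x)) / u) ≤ ENNReal.ofReal n := by
  have hmeas : Measurable fun p : ℝ × ℝ => (((negCount n p.2 (diagSeq n lam α E p.1) : ℝ) -
        negCount n (-p.2) (diagSeq n lam α E p.1)) / p.2) := by
    refine (Measurable.sub (measurable_negCount_diagSeq n lam α E) ?_).div measurable_snd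
    exact Measurable.comp (g := fun p : ℝ × ℝ => (negCount n p.2 (diagSeq n lam α E p.1) : ℝ))
      (measurable_negCount_diagSeq n lam α E) (measurable_fst.prodMk measurable_snd.neg)
  rw [lintegral_lintegral_swap (by exact (ENNReal.measurable_ofReal.comp hmeas).aemeasurable)]
  calc _ ≤ ∫⁻ u in Set.Ioo 0 (lam / 2), ENNReal.ofReal (2 * n / lam) := by
        refine setLIntegral_mono_ae' measurableSet_Ioo (Filter.Eventually.of_forall fun u hu => ?_)
        have hi1 := intervalIntegrable_negCount n lam α E u 0
        have hi2 := intervalIntegrable_negCount n lam α E (-u) 0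
        simp only [add_zero] at hi1 hi2
        have hi := ((hi1.sub hi2).div_const u)
        rw [intervalIntegrable_iff_integrableOn_Ioc_of_le zero_le_one] at hi
        rw [← ofReal_integral_eq_lintegral_ofReal hi]
        · refine ENNReal.ofReal_le_ofReal ?_
          rw [← intervalIntegral.integral_of_le zero_le_one, intervalIntegral.integral_div,
            div_le_iff₀ hu.1]
          refine (integral_negCount_sub_le n α E hlam hu.1.le hu.2.le).trans_eq ?_
          ring
        · filter_upwards with x
          have : (negCount n (-u) (diagSeq n lam α E x) : ℝ) ≤ negCount n u (diagSeq n lam α E x) :=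
            Nat.cast_le.2 (negCount_mono n (by linarith [hu.1]) _)
          exact div_nonneg (sub_nonneg.2 this) hu.1.le
    _ = ENNReal.ofReal n := by
        rw [setLIntegral_const, Real.volume_Ioo, ← ENNReal.ofReal_mul (by positivity)]
        congr 1
        field_simp
        ring

lemma integral_log_matNorm_ge (n : ℕ) {lam : ℝ} (α E : ℝ) (hlam : 0 < lam) :
    n * Real.log (lam / 2) - n ≤
      ∫ x in (0 : ℝ)..1, Real.log (matNorm (transferMat lam Int.fract α E x n)) := by
  have hi := integrable_log_matNorm lam α E n
  have hc : IntegrableOn (fun _ : ℝ => n * Real.log (lam / 2)) (Set.Ioc 0 1) := integrableOn_const (by simp)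
  have key : ∫ x in Set.Ioc (0 : ℝ) 1, (n * Real.log (lam / 2) -
      Real.log (matNorm (transferMat lam Int.fract α E x n))) ≤ n := by
    have hsub : IntegrableOn (fun x => n * Real.log (lam / 2) -
        Real.log (matNorm (transferMat lam Int.fract α E x n))) (Set.Ioc 0 1) := hc.sub hi
    rw [integral_eq_lintegral_pos_part_sub_lintegral_neg_part hsub]
    refine (sub_le_self _ ENNReal.toReal_nonneg).trans ?_
    refine ENNReal.toReal_le_of_le_ofReal (by positivity) ?_
    exact (lintegral_mono fun x => log_matNorm_ge n α E x (half_pos hlam)).trans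
      (lintegral_count_le n α E hlam)
  rw [integral_sub hc hi] at key
  rw [intervalIntegral.integral_of_le zero_le_one]
  simp at key
  linarith

/-- Lyapunov exponent lower bound for the potential `v(x) = {x}`. -/
theorem lyapunov_lower_bound_fract
    (α lam : ℝ) (hα : Irrational α) (hlam : 0 < lam) :
    ∀ E : ℝ, max 0 (Real.log (lam / (2 * Real.exp 1))) ≤ lyap lam Int.fract α E := by
  intro E
  refine le_ciInf fun n => ?_
  have hn : (0 : ℝ) < ((n : ℕ) : ℝ) := Nat.cast_pos.2 n.pos
  rw [one_div, inv_mul_eq_div, le_div_iff₀ hn]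
  rcases max_cases 0 (Real.log (lam / (2 * Real.exp 1))) with ⟨h, _⟩ | ⟨h, _⟩
  · rw [h, zero_mul]
    exact intervalIntegral.integral_nonneg zero_le_one fun x _ =>
      Real.log_nonneg (one_le_matNorm _ _ _ _ _ _)
  · rw [h, ← div_div, Real.log_div (by positivity) (Real.exp_pos 1).ne', Real.log_exp]
    linarith [integral_log_matNorm_ge n α E hlam]

end
end

section
/- For every x ∈ ℝ, the spectrum of the bounded self-adjoint operator H(x) on l²(ℤ), defined by (H(x)ψ)(m) = ψ(m+1) + ψ(m−1) + λ v(x + mα) ψ(m), has positive Lebesgue measure. -/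
/-!
The argument is a finite-volume form of the Lipschitz continuity of the integrated density of
states: this density of states has total mass `1`, is carried by the spectrum, and has Lebesgue
density at most `1 / (lam * γm)`. It is run entirely on eigenvalue counts of the compressions of
`H(x)` to the boxes `{0, …, n - 1}`, for the given phase `x` only.

*Lipschitz bound.* Choose integers `l, p` with `t = l α - p` small and positive, and let
`s = lam γm t`. Translating a sequence by `l` replaces the potential `V m` by `V (m - l)`, which is
smaller by at least `s` except at the sites where the phase wraps around. A telescoping sum of
fractional parts shows that there are at most `t n + O(|l|)` exceptional sites in the box
(`ncard_badSites_le`). A dimension count then shows that every half-open energy window of length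
`s` contains at most `t n + O(|l|)` eigenvalues (`card_eigenvalues_window_le`).

*Resolvent set.* If `c` is not in the spectrum, then `‖(H - c) ψ‖ ≥ δ ‖ψ‖` for some `δ > 0`, and
the box has at most two eigenvalues in `(c - δ, c + δ)`, as a combination of three eigenvectors can
be made to vanish at both ends of the box. By compactness, an interval that misses the spectrum
contains a number of eigenvalues bounded independently of `n`
(`exists_card_eigenvalues_le_of_disjoint`).

*Conclusion.* If the spectrum were null, for `t` small enough the windows of length `s` whose
closure meets the spectrum would number fewer than `1 / (2 t)` (`card_cells_mul_le`). They would
contain at most `n / 2 + O(1)` eigenvalues, and the remaining windows `O(1)`, whereas the box has `n`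
eigenvalues: a contradiction for large `n`.
-/

open MeasureTheory Filter

noncomputable section

/-! ### Finite boxes and shifts in `ℓ²(ℤ)` -/

/-- Real square-summable sequences indexed by `ℤ`. -/
abbrev EllTwo : Type := lp (fun _ : ℤ => ℝ) 2

lemma ellTwo_inner_eq (f g : EllTwo) : inner ℝ f g = ∑' m : ℤ, f m * g m := by
  rw [lp.inner_eq_tsum]
  exact tsum_congr fun m => by simp [mul_comm]

lemma ellTwo_summable_mul (f g : EllTwo) : Summable fun m : ℤ => f m * g m := by
  refine (lp.summable_inner (𝕜 := ℝ) f g).congr fun m => by simp [mul_comm]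

/-- The translation `(shift l ψ)(m) = ψ(m + l)` on `ℓ²(ℤ)`. -/
def shift (l : ℤ) : EllTwo →ₗ[ℝ] EllTwo where
  toFun ψ := ⟨fun m => ψ (m + l), by
    have h := (memℓp_gen_iff (p := 2) (by norm_num)).1 (lp.memℓp ψ)
    exact (memℓp_gen_iff (p := 2) (by norm_num)).2
      ((Equiv.addRight l).summable_iff.2 h)⟩
  map_add' _ _ := rfl
  map_smul' _ _ := rfl

@[simp] lemma shift_apply (l : ℤ) (ψ : EllTwo) (m : ℤ) : shift l ψ m = ψ (m + l) := rfl

lemma inner_shift_left (l : ℤ) (f g : EllTwo) :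
    inner ℝ (shift l f) g = inner ℝ f (shift (-l) g) := by
  rw [ellTwo_inner_eq, ellTwo_inner_eq,
    ← (Equiv.addRight l).tsum_eq fun m => f m * shift (-l) g m]
  simp

lemma norm_shift (l : ℤ) (f : EllTwo) : ‖shift l f‖ = ‖f‖ := by
  have h : inner ℝ (shift l f) (shift l f) = inner ℝ f f := by
    rw [inner_shift_left]
    congr 1
    ext m
    simp
  rw [real_inner_self_eq_norm_sq, real_inner_self_eq_norm_sq] at h
  exact (sq_eq_sq₀ (norm_nonneg _) (norm_nonneg _)).1 h

/-- Sequences supported in the box `{0, …, n - 1}`. -/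
def box (n : ℕ) : Submodule ℝ EllTwo where
  carrier := {ψ | ∀ m : ℤ, (m < 0 ∨ (n : ℤ) ≤ m) → ψ m = 0}
  add_mem' {f g} hf hg m hm := by simp [hf m hm, hg m hm]
  zero_mem' m _ := rfl
  smul_mem' c f hf m hm := by simp [hf m hm]

lemma mem_box {n : ℕ} {ψ : EllTwo} :
    ψ ∈ box n ↔ ∀ m : ℤ, (m < 0 ∨ (n : ℤ) ≤ m) → ψ m = 0 := Iff.rfl

/-- Restriction of the sequences of `box n` to the sites of the box. -/
def boxRestrict (n : ℕ) : box n →ₗ[ℝ] (Fin n → ℝ) where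
  toFun ψ i := ψ.1 ((i : ℕ) : ℤ)
  map_add' _ _ := rfl
  map_smul' _ _ := rfl

/-- Restriction to the box identifies `box n` with `Fin n → ℝ`. -/
def boxEquiv (n : ℕ) : box n ≃ₗ[ℝ] (Fin n → ℝ) :=
  LinearEquiv.ofBijective (boxRestrict n) (by
    constructor
    · intro ψ φ h
      ext m
      by_cases hm : m < 0 ∨ (n : ℤ) ≤ m
      · rw [ψ.2 m hm, φ.2 m hm]
      · push Not at hm
        have h' : ψ.1 (m.toNat : ℤ) = φ.1 (m.toNat : ℤ) := congrFun h ⟨m.toNat, by omega⟩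
        rwa [Int.toNat_of_nonneg hm.1] at h'
    · intro g
      refine ⟨⟨∑ i : Fin n, lp.single 2 ((i : ℕ) : ℤ) (g i), ?_⟩, ?_⟩
      · intro m hm
        rw [lp.coeFn_sum, Finset.sum_apply]
        refine Finset.sum_eq_zero fun i _ => ?_
        have := i.2
        exact lp.single_apply_ne _ _ _ (by omega)
      · funext j
        change (∑ i : Fin n, lp.single 2 ((i : ℕ) : ℤ) (g i) : EllTwo) ((j : ℕ) : ℤ) = g j
        rw [lp.coeFn_sum, Finset.sum_apply, Finset.sum_eq_single j]
        · exact lp.single_apply_self _ _ _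
        · intro i _ hij
          refine lp.single_apply_ne _ _ _ ?_
          intro h
          exact hij (Fin.ext (by exact_mod_cast h.symm))
        · simp)

instance (n : ℕ) : FiniteDimensional ℝ (box n) := (boxEquiv n).symm.finiteDimensional

lemma finrank_box (n : ℕ) : Module.finrank ℝ (box n) = n := by
  rw [(boxEquiv n).finrank_eq, Module.finrank_fin_fun]

/-! ### Diagonalization of the compressed operator -/

/-- Orthonormal diagonalization of the compression of `T` to `box n`, recorded through the
quadratic form of `T` and, for the vectors of the box that `T` keeps in the box, through
the norms `‖T ψ - c ψ‖`. -/
structure BoxDiag (T : EllTwo →L[ℝ] EllTwo) (n : ℕ) where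
  /-- the eigenvectors -/
  b : OrthonormalBasis (Fin n) ℝ (box n)
  /-- the eigenvalues -/
  μ : Fin n → ℝ
  form : ∀ ψ : box n, inner ℝ (T ψ) (ψ : EllTwo) = ∑ i, μ i * (b.repr ψ i) ^ 2
  dist : ∀ (ψ : box n) (c : ℝ), T ψ ∈ box n →
    ‖T ψ - c • (ψ : EllTwo)‖ ^ 2 = ∑ i, (μ i - c) ^ 2 * (b.repr ψ i) ^ 2

lemma norm_sq_eq_sum_repr {n : ℕ} (b : OrthonormalBasis (Fin n) ℝ (box n)) (ψ : box n) :
    ‖(ψ : EllTwo)‖ ^ 2 = ∑ i, (b.repr ψ i) ^ 2 := by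
  have h := b.repr.norm_map ψ
  rw [← Submodule.coe_norm, ← h, EuclideanSpace.norm_sq_eq]
  simp

/-- Every symmetric operator can be diagonalized on every box. -/
def boxDiag {T : EllTwo →L[ℝ] EllTwo} (hT : (T : EllTwo →ₗ[ℝ] EllTwo).IsSymmetric) (n : ℕ) :
    BoxDiag T n := by
  let A : box n →ₗ[ℝ] box n :=
    ((box n).orthogonalProjectionOnto ∘L T ∘L (box n).subtypeL : box n →L[ℝ] box n)
  have hA : A.IsSymmetric := by
    intro f g
    change inner ℝ ((box n).orthogonalProjectionOnto (T f)) g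
      = inner ℝ f ((box n).orthogonalProjectionOnto (T g))
    rw [Submodule.inner_orthogonalProjectionOnto_eq_of_mem_left,
      Submodule.inner_orthogonalProjectionOnto_eq_of_mem_right]
    exact hT f g
  have hrepr : ∀ (ψ : box n) (i : Fin n),
      (hA.eigenvectorBasis (finrank_box n)).repr (A ψ) i
        = hA.eigenvalues (finrank_box n) i * (hA.eigenvectorBasis (finrank_box n)).repr ψ i :=
    fun ψ i => by
      simpa using hA.eigenvectorBasis_apply_self_apply (finrank_box n) ψ i
  refine ⟨hA.eigenvectorBasis (finrank_box n), hA.eigenvalues (finrank_box n), ?_, ?_⟩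
  · intro ψ
    have h1 : inner ℝ (T ψ) (ψ : EllTwo) = inner ℝ (A ψ) ψ :=
      (Submodule.inner_orthogonalProjectionOnto_eq_of_mem_right ψ (T ψ)).symm
    rw [h1, ← (hA.eigenvectorBasis (finrank_box n)).repr.inner_map_map, PiLp.inner_apply]
    refine Finset.sum_congr rfl fun i _ => ?_
    rw [hrepr]
    simp
    ring
  · intro ψ c hψ
    have h1 : T ψ - c • (ψ : EllTwo) = ((A ψ - c • ψ : box n) : EllTwo) := by
      have : ((A ψ : box n) : EllTwo) = T ψ :=
        congrArg Subtype.val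
          (Submodule.orthogonalProjectionOnto_mem_subspace_eq_self (⟨T ψ, hψ⟩ : box n))
      rw [Submodule.coe_sub, this, Submodule.coe_smul]
    rw [h1, norm_sq_eq_sum_repr (hA.eigenvectorBasis (finrank_box n))]
    refine Finset.sum_congr rfl fun i _ => ?_
    rw [map_sub, map_smul, PiLp.sub_apply, PiLp.smul_apply, hrepr, smul_eq_mul]
    ring

/-- Dimension count: fewer linear conditions than indices in `S` leave a nonzero vector in the span
of the eigenvectors indexed by `S`. -/
lemma exists_ne_zero_of_card_lt {n : ℕ} (b : OrthonormalBasis (Fin n) ℝ (box n))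
    (S : Finset (Fin n)) {F : Type*} [AddCommGroup F] [Module ℝ F] [FiniteDimensional ℝ F]
    (L : box n →ₗ[ℝ] F) (h : Module.finrank ℝ F < S.card) :
    ∃ ψ : box n, ψ ≠ 0 ∧ L ψ = 0 ∧ ∀ i ∉ S, b.repr ψ i = 0 := by
  let R : box n →ₗ[ℝ] ((Sᶜ : Finset (Fin n)) → ℝ) :=
    { toFun := fun ψ i => b.repr ψ i
      map_add' := fun _ _ => by ext; simp
      map_smul' := fun _ _ => by ext; simp }
  have hker : (L.prod R).ker ≠ ⊥ := by
    apply LinearMap.ker_ne_bot_of_finrank_lt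
    rw [Module.finrank_prod, Module.finrank_fintype_fun_eq_card, finrank_box,
      Fintype.card_coe, Finset.card_compl, Fintype.card_fin]
    have := S.card_le_univ
    rw [Fintype.card_fin] at this
    omega
  obtain ⟨ψ, hψ, hne⟩ := Submodule.exists_mem_ne_zero_of_ne_bot hker
  rw [LinearMap.mem_ker, LinearMap.prod_apply, Function.prod_apply, Prod.mk_eq_zero] at hψ
  refine ⟨ψ, hne, hψ.1, fun i hi => ?_⟩
  exact congrFun hψ.2 ⟨i, Finset.mem_compl.2 hi⟩

lemma exists_repr_ne_zero {n : ℕ} (b : OrthonormalBasis (Fin n) ℝ (box n)) {ψ : box n}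
    (hψ : ψ ≠ 0) : ∃ i, b.repr ψ i ≠ 0 := by
  by_contra! h
  exact hψ (b.repr.injective (by ext i; simp [h i]))

/-! ### The Schrödinger operator -/

/-- `T` is the discrete Schrödinger operator on `ℓ²(ℤ)` with potential `V`. -/
def IsSchrodinger (T : EllTwo →L[ℝ] EllTwo) (V : ℤ → ℝ) : Prop :=
  ∀ (ψ : EllTwo) (m : ℤ), T ψ m = ψ (m + 1) + ψ (m - 1) + V m * ψ m

lemma IsSchrodinger.isSymmetric {T : EllTwo →L[ℝ] EllTwo} {V : ℤ → ℝ} (hT : IsSchrodinger T V) :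
    (T : EllTwo →ₗ[ℝ] EllTwo).IsSymmetric := by
  -- `D` is the diagonal part, obtained by removing the two translations from `T`.
  let D : EllTwo → EllTwo := fun ψ => T ψ - shift 1 ψ - shift (-1) ψ
  have hD : ∀ ψ m, D ψ m = V m * ψ m := by
    intro ψ m
    change T ψ m - ψ (m + 1) - ψ (m + -1) = _
    rw [hT ψ m, ← sub_eq_add_neg]
    ring
  have hTD : ∀ ψ, T ψ = D ψ + shift 1 ψ + shift (-1) ψ := by
    intro ψ
    simp only [D]
    abel
  intro f g
  change inner ℝ (T f) g = inner ℝ f (T g)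
  rw [hTD f, hTD g, inner_add_left, inner_add_left, inner_add_right, inner_add_right,
    inner_shift_left, inner_shift_left, neg_neg]
  have h : inner ℝ (D f) g = inner ℝ f (D g) := by
    rw [ellTwo_inner_eq, ellTwo_inner_eq]
    refine tsum_congr fun m => ?_
    rw [hD, hD]
    ring
  rw [h]
  ring

/-- Translating `ψ` by `l` replaces `V m` by `V (m - l)`; where this lowers the potential by at
least `s`, the energy drops by at least `s ‖ψ‖²`. -/
lemma IsSchrodinger.form_shift_le {T : EllTwo →L[ℝ] EllTwo} {V : ℤ → ℝ}
    (hT : IsSchrodinger T V) (l : ℤ) (s : ℝ) (ψ : EllTwo)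
    (h : ∀ m, ψ m ≠ 0 → V (m - l) + s ≤ V m) :
    inner ℝ (T (shift l ψ)) (shift l ψ) + s * ‖ψ‖ ^ 2 ≤ inner ℝ (T ψ) ψ := by
  have h1 : inner ℝ (T (shift l ψ)) (shift l ψ) = inner ℝ (shift (-l) (T (shift l ψ))) ψ := by
    rw [inner_shift_left, neg_neg]
  have h2 : ∀ m, shift (-l) (T (shift l ψ)) m = ψ (m + 1) + ψ (m - 1) + V (m - l) * ψ m := by
    intro m
    rw [shift_apply, hT]
    simp only [shift_apply]
    rw [show m + -l + 1 + l = m + 1 by ring, show m + -l - 1 + l = m - 1 by ring,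
      show m + -l + l = m by ring, ← sub_eq_add_neg]
  have h3 : s * ‖ψ‖ ^ 2 = inner ℝ (s • ψ) ψ := by
    rw [real_inner_smul_left, real_inner_self_eq_norm_sq]
  rw [h1, h3, ← inner_add_left, ellTwo_inner_eq, ellTwo_inner_eq]
  refine (ellTwo_summable_mul _ _).tsum_le_tsum (fun m => ?_) (ellTwo_summable_mul _ _)
  rw [lp.coeFn_add, Pi.add_apply, h2, lp.coeFn_smul, Pi.smul_apply, smul_eq_mul, hT]
  by_cases hm : ψ m = 0
  · simp [hm]
  · nlinarith [h m hm, mul_self_nonneg (ψ m)]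

/-! ### Counting eigenvalues of the boxes -/

lemma BoxDiag.abs_μ_le {T : EllTwo →L[ℝ] EllTwo} {n : ℕ} (d : BoxDiag T n) (i : Fin n) :
    |d.μ i| ≤ ‖T‖ := by
  have h := d.form (d.b i)
  have hn : ‖((d.b i : box n) : EllTwo)‖ = 1 := d.b.norm_eq_one i
  rw [Finset.sum_eq_single i] at h
  · rw [d.b.repr_self] at h
    simp only [PiLp.single_apply, if_true, one_pow, mul_one] at h
    rw [← h]
    refine (abs_real_inner_le_norm _ _).trans ?_
    have := T.le_opNorm ((d.b i : box n) : EllTwo)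
    rw [hn] at this ⊢
    linarith
  · intro j _ hj
    rw [d.b.repr_self]
    simp [hj]
  · simp

/-- Near a point `c` of the resolvent set every box has at most two eigenvalues: a combination of
three eigenvectors can be made to vanish at both ends of the box, so that it becomes an approximate
eigenvector of the operator on the whole line. -/
lemma card_eigenvalues_near_le_two {T : EllTwo →L[ℝ] EllTwo} {V : ℤ → ℝ}
    (hT : IsSchrodinger T V) {c δ : ℝ} (hδ : ∀ ψ, δ * ‖ψ‖ ≤ ‖T ψ - c • ψ‖)
    {n : ℕ} (d : BoxDiag T n) :
    Nat.card {i // d.μ i ∈ Metric.ball c δ} ≤ 2 := by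
  classical
  by_contra! hcard
  rw [Nat.card_eq_fintype_card, Fintype.card_subtype] at hcard
  obtain ⟨ψ, hne, hL, hS⟩ := exists_ne_zero_of_card_lt d.b _
    (F := ℝ × ℝ)
    { toFun := fun ψ : box n => (ψ.1 0, ψ.1 ((n : ℤ) - 1))
      map_add' := fun _ _ => rfl
      map_smul' := fun _ _ => rfl } (by simpa using hcard)
  have h0 : ψ.1 0 = 0 := congrArg Prod.fst hL
  have h1 : ψ.1 ((n : ℤ) - 1) = 0 := congrArg Prod.snd hL
  have hmem : T ψ ∈ box n := by
    intro m hm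
    have hm0 := ψ.2 m hm
    rw [hT, hm0]
    have e1 : ψ.1 (m + 1) = 0 := by
      rcases eq_or_ne (m + 1) 0 with h | h
      · rw [h, h0]
      · exact ψ.2 _ (by omega)
    have e2 : ψ.1 (m - 1) = 0 := by
      rcases eq_or_ne m n with h | h
      · rw [h, h1]
      · exact ψ.2 _ (by omega)
    rw [e1, e2]
    simp
  obtain ⟨j, hj⟩ := exists_repr_ne_zero d.b hne
  have hmem_ball : ∀ i, d.b.repr ψ i ≠ 0 → |d.μ i - c| < δ := by
    intro i hi
    by_contra hcon
    exact hi (hS i (by simpa [Real.dist_eq] using hcon))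
  have hδ0 : 0 < δ := (abs_nonneg _).trans_lt (hmem_ball j hj)
  have hlt : ‖T ψ - c • (ψ : EllTwo)‖ ^ 2 < (δ * ‖(ψ : EllTwo)‖) ^ 2 := by
    rw [d.dist ψ c hmem, mul_pow, norm_sq_eq_sum_repr d.b, Finset.mul_sum]
    have hsq : ∀ i, d.b.repr ψ i ≠ 0 → (d.μ i - c) ^ 2 < δ ^ 2 := fun i hi =>
      sq_lt_sq.2 (by rw [abs_of_pos hδ0]; exact hmem_ball i hi)
    refine Finset.sum_lt_sum (fun i _ => ?_) ⟨j, Finset.mem_univ _, ?_⟩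
    · by_cases hi : d.b.repr ψ i = 0
      · simp [hi]
      · exact mul_le_mul_of_nonneg_right (hsq i hi).le (sq_nonneg _)
    · exact mul_lt_mul_of_pos_right (hsq j hj) (by positivity)
  have := hδ ψ
  have h2 : (δ * ‖(ψ : EllTwo)‖) ^ 2 ≤ ‖T ψ - c • (ψ : EllTwo)‖ ^ 2 :=
    pow_le_pow_left₀ (by positivity) this 2
  linarith

/-- A compact set of energies in the resolvent set contains a number of box eigenvalues that is
bounded independently of the size of the box. -/
lemma exists_card_eigenvalues_le_of_disjoint {T : EllTwo →L[ℝ] EllTwo} {V : ℤ → ℝ}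
    (hT : IsSchrodinger T V) (d : ∀ n, BoxDiag T n) {K : Set ℝ} (hK : IsCompact K)
    (hKT : Disjoint K (spectrum ℝ T)) :
    ∃ C : ℕ, ∀ n, Nat.card {i // (d n).μ i ∈ K} ≤ C := by
  refine hK.induction_on (p := fun K => ∃ C : ℕ, ∀ n, Nat.card {i // (d n).μ i ∈ K} ≤ C)
    ⟨0, fun n => by simp⟩ ?_ ?_ ?_
  · rintro s t hst ⟨C, hC⟩
    refine ⟨C, fun n => le_trans ?_ (hC n)⟩
    exact Nat.card_mono (Set.toFinite {i | (d n).μ i ∈ t}) fun i hi => hst hi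
  · rintro s t ⟨C, hC⟩ ⟨C', hC'⟩
    refine ⟨C + C', fun n => le_trans ?_ (add_le_add (hC n) (hC' n))⟩
    exact Set.ncard_union_le {i | (d n).μ i ∈ s} {i | (d n).μ i ∈ t}
  · intro c hc
    have hu : IsUnit (algebraMap ℝ (EllTwo →L[ℝ] EllTwo) c - T) :=
      spectrum.notMem_iff.1 (Set.disjoint_left.1 hKT hc)
    obtain ⟨u, hu⟩ := hu
    set R : EllTwo →L[ℝ] EllTwo := ((u⁻¹ : (EllTwo →L[ℝ] EllTwo)ˣ) : EllTwo →L[ℝ] EllTwo) with hR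
    have hinv : ∀ ψ, R (c • ψ - T ψ) = ψ := by
      intro ψ
      have h : R * (algebraMap ℝ (EllTwo →L[ℝ] EllTwo) c - T) = 1 := by
        rw [← hu, hR, Units.inv_mul]
      have := DFunLike.congr_fun h ψ
      simpa [Algebra.algebraMap_eq_smul_one] using this
    have hpos : 0 < ‖R‖ + 1 := by positivity
    refine ⟨Metric.ball c (‖R‖ + 1)⁻¹,
      mem_nhdsWithin_of_mem_nhds (Metric.ball_mem_nhds _ (by positivity)), 2, fun n => ?_⟩
    refine card_eigenvalues_near_le_two hT (fun ψ => ?_) (d n)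
    rw [inv_mul_le_iff₀ hpos, norm_sub_rev]
    calc ‖ψ‖ = ‖R (c • ψ - T ψ)‖ := by rw [hinv]
      _ ≤ ‖R‖ * ‖c • ψ - T ψ‖ := R.le_opNorm _
      _ ≤ (‖R‖ + 1) * ‖c • ψ - T ψ‖ := by gcongr; linarith

/-- The sites `m` of the box of size `n` at which translation by `l` leaves the box, or does not
lower the potential by `s`. -/
def badSites (V : ℤ → ℝ) (l : ℤ) (s : ℝ) (n : ℕ) : Set ℤ :=
  {m | 0 ≤ m ∧ m < n ∧ (m - l < 0 ∨ (n : ℤ) ≤ m - l ∨ V m < V (m - l) + s)}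

lemma badSites_finite (V : ℤ → ℝ) (l : ℤ) (s : ℝ) (n : ℕ) : (badSites V l s n).Finite :=
  (Set.finite_Ico (0 : ℤ) n).subset fun _ hm => ⟨hm.1, hm.2.1⟩

/-- An energy window of length `s` contains at most as many box eigenvalues as there are bad sites.
Otherwise a combination of the eigenvectors with energy at most `E + s` vanishes on the bad sites
and has a translate orthogonal to all eigenvectors with energy at most `E`; this translate has
energy both above `E` and at most `E`. -/
lemma card_eigenvalues_window_le {T : EllTwo →L[ℝ] EllTwo} {V : ℤ → ℝ}
    (hT : IsSchrodinger T V) {n : ℕ} (d : BoxDiag T n) (l : ℤ) {s : ℝ} (hs : 0 ≤ s)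
    (E : ℝ) :
    Nat.card {i // d.μ i ∈ Set.Ioc E (E + s)} ≤ (badSites V l s n).ncard := by
  classical
  have hfin := badSites_finite V l s n
  have : Fintype (badSites V l s n) := hfin.fintype
  by_contra! hcard
  let S : Finset (Fin n) := Finset.univ.filter fun i => d.μ i ≤ E + s
  let S' : Finset (Fin n) := Finset.univ.filter fun i => d.μ i ≤ E
  have hSS : (badSites V l s n).ncard + S'.card < S.card := by
    have h1 : Nat.card {i // d.μ i ∈ Set.Ioc E (E + s)} + S'.card ≤ S.card := by
      rw [Nat.card_eq_fintype_card, Fintype.card_subtype, ← Finset.card_union_of_disjoint]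
      · refine Finset.card_le_card fun i hi => ?_
        simp only [S, S', Finset.mem_union, Finset.mem_filter, Finset.mem_univ, true_and,
          Set.mem_Ioc] at hi ⊢
        rcases hi with hi | hi
        · exact hi.2
        · linarith
      · refine Finset.disjoint_left.2 fun i hi hi' => ?_
        simp only [S', Finset.mem_filter, Finset.mem_univ, true_and, Set.mem_Ioc] at hi hi'
        linarith [hi.1]
    omega
  obtain ⟨ψ, hne, hL, hS⟩ := exists_ne_zero_of_card_lt d.b S
    (F := (badSites V l s n → ℝ) × (S' → ℝ))
    { toFun := fun ψ : box n => (fun m => ψ.1 m,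
        fun i => inner ℝ (d.b i : EllTwo) (shift l ψ))
      map_add' := fun f g => by
        refine Prod.ext rfl (funext fun i => ?_)
        simp [inner_add_right]
      map_smul' := fun c f => by
        refine Prod.ext rfl (funext fun i => ?_)
        simp [inner_smul_right] }
    (by
      rw [Module.finrank_prod, Module.finrank_fintype_fun_eq_card,
        Module.finrank_fintype_fun_eq_card, Fintype.card_coe, ← Nat.card_eq_fintype_card]
      exact hSS)
  have hbad : ∀ m ∈ badSites V l s n, ψ.1 m = 0 := fun m hm =>
    congrFun (congrArg Prod.fst hL) ⟨m, hm⟩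
  have horth : ∀ i, d.μ i ≤ E → inner ℝ (d.b i : EllTwo) (shift l ψ) = 0 := fun i hi =>
    congrFun (congrArg Prod.snd hL) ⟨i, by simpa [S'] using hi⟩
  have hshift : shift l (ψ : EllTwo) ∈ box n := by
    intro m hm
    rw [shift_apply]
    by_cases hml : m + l < 0 ∨ (n : ℤ) ≤ m + l
    · exact ψ.2 _ hml
    · push Not at hml
      refine hbad _ ⟨hml.1, hml.2, ?_⟩
      rw [add_sub_cancel_right]
      tauto
  have hform : inner ℝ (T (shift l ψ)) (shift l (ψ : EllTwo)) + s * ‖(ψ : EllTwo)‖ ^ 2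
      ≤ inner ℝ (T ψ) (ψ : EllTwo) := by
    refine hT.form_shift_le l s ψ fun m hm => ?_
    by_contra! hV
    refine hm (hbad m ?_)
    have hin : ¬ (m < 0 ∨ (n : ℤ) ≤ m) := fun h => hm (ψ.2 m h)
    push Not at hin
    exact ⟨hin.1, hin.2, Or.inr (Or.inr hV)⟩
  have hup : inner ℝ (T ψ) (ψ : EllTwo) ≤ (E + s) * ‖(ψ : EllTwo)‖ ^ 2 := by
    rw [d.form, norm_sq_eq_sum_repr d.b, Finset.mul_sum]
    refine Finset.sum_le_sum fun i _ => ?_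
    by_cases hi : d.μ i ≤ E + s
    · exact mul_le_mul_of_nonneg_right hi (sq_nonneg _)
    · simp [hS i (by simpa [S] using hi)]
  let φ : box n := ⟨shift l ψ, hshift⟩
  have hφnorm : ‖(φ : EllTwo)‖ = ‖(ψ : EllTwo)‖ := norm_shift l ψ
  have hφne : φ ≠ 0 := by
    intro h
    rw [h] at hφnorm
    apply hne
    have : ‖(ψ : EllTwo)‖ = 0 := by simpa using hφnorm.symm
    exact Subtype.ext (norm_eq_zero.1 this)
  have hφrepr : ∀ i, d.μ i ≤ E → d.b.repr φ i = 0 := by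
    intro i hi
    rw [d.b.repr_apply_apply]
    exact horth i hi
  obtain ⟨j, hj⟩ := exists_repr_ne_zero d.b hφne
  have hlow : E * ‖(φ : EllTwo)‖ ^ 2 < inner ℝ (T φ) (φ : EllTwo) := by
    rw [d.form, norm_sq_eq_sum_repr d.b, Finset.mul_sum]
    refine Finset.sum_lt_sum (fun i _ => ?_) ⟨j, Finset.mem_univ _, ?_⟩
    · by_cases hi : d.μ i ≤ E
      · simp [hφrepr i hi]
      · exact mul_le_mul_of_nonneg_right (not_le.1 hi).le (sq_nonneg _)
    · have : ¬ d.μ j ≤ E := fun h => hj (hφrepr j h)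
      exact mul_lt_mul_of_pos_right (not_le.1 this) (by positivity)
  rw [hφnorm] at hlow
  change _ < inner ℝ (T (shift l ψ)) (shift l (ψ : EllTwo)) at hlow
  linarith

/-! ### Bad sites of the sawtooth potential -/

/-- Sliding a window of length `n` by `j` changes the sum of a `[0, 1]`-valued function by at
most `|j|`. -/
lemma abs_sum_shift_sub_le (g : ℤ → ℝ) (h0 : ∀ m, 0 ≤ g m) (h1 : ∀ m, g m ≤ 1) (n : ℕ) (j : ℤ) :
    |∑ m ∈ Finset.range n, g (m + j) - ∑ m ∈ Finset.range n, g m| ≤ |(j : ℝ)| := by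
  have step : ∀ j : ℤ, |∑ m ∈ Finset.range n, g (m + (j + 1))
      - ∑ m ∈ Finset.range n, g (m + j)| ≤ 1 := by
    intro j
    rw [← Finset.sum_sub_distrib]
    have h : ∑ m ∈ Finset.range n, (g (m + (j + 1)) - g (m + j)) = g (n + j) - g (0 + j) := by
      have := Finset.sum_range_sub (fun m : ℕ => g (m + j)) n
      simp only [Nat.cast_add, Nat.cast_one, Nat.cast_zero] at this
      rw [← this]
      refine Finset.sum_congr rfl fun m _ => ?_
      rw [show (m : ℤ) + (j + 1) = m + 1 + j by ring]
    rw [h, abs_le]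
    constructor <;> linarith [h0 (n + j), h1 (n + j), h0 (0 + j), h1 (0 + j)]
  have key : ∀ k : ℕ, ∀ j : ℤ, |∑ m ∈ Finset.range n, g (m + (j + k))
      - ∑ m ∈ Finset.range n, g (m + j)| ≤ k := by
    intro k j
    induction k with
    | zero => simp
    | succ k ih =>
      have h := step (j + k)
      push_cast
      rw [← add_assoc j]
      calc _ ≤ _ := abs_sub_le _ (∑ m ∈ Finset.range n, g (m + (j + k))) _
        _ ≤ k + 1 := by linarith
  rcases le_total 0 j with hj | hj
  · lift j to ℕ using hj
    simpa using key j 0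
  · obtain ⟨k, rfl⟩ : ∃ k : ℕ, j = -k := ⟨j.natAbs, by omega⟩
    have := key k (-k)
    rw [abs_sub_comm]
    simpa using this

lemma exists_small_mul_sub (α : ℝ) (hα : Irrational α) {ε : ℝ} (hε : 0 < ε) :
    ∃ l p : ℤ, 0 < l * α - p ∧ l * α - p < ε := by
  obtain ⟨N, hN⟩ := exists_nat_one_div_lt hε
  obtain ⟨j, k, hk, -, h⟩ := Real.exists_int_int_abs_mul_sub_le α (n := N + 1) (by omega)
  have hlt : |(k : ℝ) * α - j| < ε := by
    refine h.trans_lt (lt_trans ?_ hN)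
    push_cast
    apply one_div_lt_one_div_of_lt <;> linarith [(Nat.cast_nonneg N : (0 : ℝ) ≤ N)]
  have hne : (k : ℝ) * α - j ≠ 0 := by
    have := (hα.intCast_mul hk.ne').sub_intCast j
    exact this.ne_zero
  rcases lt_or_gt_of_ne hne with hneg | hpos
  · refine ⟨-k, -j, ?_, ?_⟩
    · push_cast
      linarith
    · rw [abs_of_neg hneg] at hlt
      push_cast
      linarith
  · exact ⟨k, j, hpos, by rwa [abs_of_pos hpos] at hlt⟩

/-- With `t = l α - p ∈ (0, 1)`, translation by `l` lowers the sawtooth potential by `lam γm t`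
except at the sites whose phase lies in `[0, t)`. The indicator of these sites is
`t - fract (x + m α) + fract (x + (m - l) α)`, so their number in a box of size `n` is
`t n + O(|l|)`. -/
lemma ncard_badSites_le (α lam γm : ℝ) (v : ℝ → ℝ) (hlam : 0 < lam)
    (hper : ∀ x : ℝ, v (x + 1) = v x)
    (hmono : ∀ x y : ℝ, 0 ≤ x → x ≤ y → y < 1 → γm * (y - x) ≤ v y - v x)
    (x : ℝ) (l p : ℤ) (ht0 : 0 < l * α - p) (ht1 : l * α - p < 1) (n : ℕ) :
    ((badSites (fun m => lam * v (x + m * α)) l (lam * γm * (l * α - p)) n).ncard : ℝ)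
      ≤ (l * α - p) * n + 2 * |(l : ℝ)| := by
  classical
  set t : ℝ := l * α - p with ht
  have hperZ : ∀ (y : ℝ) (k : ℤ), v (y + k) = v y := by
    intro y k
    have hp : Function.Periodic v 1 := hper
    simpa using hp.int_mul k y
  have hfr : ∀ y, v y = v (Int.fract y) := by
    intro y
    conv_lhs => rw [← Int.fract_add_floor y]
    exact hperZ _ _
  have hval : ∀ m : ℤ, x + ((m - l : ℤ) : ℝ) * α = x + m * α - t + ((-p : ℤ) : ℝ) := by
    intro m
    rw [ht]
    push_cast
    ring
  have hgood : ∀ m : ℤ, t ≤ Int.fract (x + m * α) →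
      lam * v (x + (m - l : ℤ) * α) + lam * γm * t ≤ lam * v (x + m * α) := by
    intro m hm
    have e : v (x + (m - l : ℤ) * α) = v (Int.fract (x + m * α) - t) := by
      rw [hval, hperZ, ← hperZ (Int.fract (x + m * α) - t) ⌊x + m * α⌋]
      congr 1
      have := Int.fract_add_floor (x + m * α)
      linarith
    have h := hmono (Int.fract (x + m * α) - t) (Int.fract (x + m * α)) (by linarith) (by linarith)
      (Int.fract_lt_one _)
    rw [e, hfr (x + m * α)]
    nlinarith
  have hind : ∀ m : ℤ, (if Int.fract (x + m * α) < t then (1 : ℝ) else 0)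
      = t - Int.fract (x + m * α) + Int.fract (x + (m - l : ℤ) * α) := by
    intro m
    have e : Int.fract (x + (m - l : ℤ) * α) = Int.fract (Int.fract (x + m * α) - t) := by
      rw [hval, Int.fract_add_intCast]
      conv_lhs => rw [← Int.fract_add_floor (x + m * α)]
      rw [show ∀ a b c : ℝ, a + b - c = a - c + b by intros; ring, Int.fract_add_intCast]
    rw [e]
    have a0 := Int.fract_nonneg (x + m * α)
    have a1 := Int.fract_lt_one (x + m * α)
    split_ifs with h
    · have : Int.fract (Int.fract (x + m * α) - t) = Int.fract (x + m * α) - t + 1 := by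
        rw [Int.fract_eq_iff]
        exact ⟨by linarith, by linarith, -1, by push_cast; ring⟩
      rw [this]
      ring
    · rw [Int.fract_eq_self (a := Int.fract (x + m * α) - t) |>.2 ⟨by linarith, by linarith⟩]
      ring
  set G : Finset ℤ := ((Finset.range n).filter
    fun m : ℕ => Int.fract (x + ((m : ℤ) : ℝ) * α) < t).image (fun m : ℕ => (m : ℤ)) with hG
  have hsub : badSites (fun m => lam * v (x + m * α)) l (lam * γm * t) n
      ⊆ ((Finset.Ico 0 l ∪ Finset.Ico (n + l) n ∪ G : Finset ℤ) : Set ℤ) := by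
    rintro m ⟨hm0, hmn, hm⟩
    simp only [Finset.coe_union, Set.mem_union, Finset.mem_coe, Finset.mem_Ico]
    rcases hm with hm | hm | hm
    · left; left; omega
    · left; right; omega
    · right
      rw [hG, Finset.mem_image]
      refine ⟨m.toNat, ?_, Int.toNat_of_nonneg hm0⟩
      rw [Finset.mem_filter, Finset.mem_range, Int.toNat_of_nonneg hm0]
      refine ⟨by omega, ?_⟩
      by_contra! hcon
      exact absurd (hgood m hcon) (not_le.2 hm)
  have hcard : (badSites (fun m => lam * v (x + m * α)) l (lam * γm * t) n).ncard
      ≤ l.natAbs + G.card := by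
    refine (Set.ncard_le_ncard hsub (Finset.finite_toSet _)).trans ?_
    rw [Set.ncard_coe_finset]
    refine (Finset.card_union_le _ _).trans ?_
    refine add_le_add_left ((Finset.card_union_le _ _).trans ?_) _
    rw [Int.card_Ico, Int.card_Ico]
    omega
  have hGcard : (G.card : ℝ) ≤ t * n + |(l : ℝ)| := by
    have h1 : (G.card : ℝ) ≤ ∑ m ∈ Finset.range n,
        (if Int.fract (x + ((m : ℤ) : ℝ) * α) < t then (1 : ℝ) else 0) := by
      rw [Finset.sum_boole]
      exact_mod_cast Finset.card_image_le
    have h2 := abs_sum_shift_sub_le (fun m : ℤ => Int.fract (x + m * α))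
      (fun m => Int.fract_nonneg _) (fun m => (Int.fract_lt_one _).le) n (-l)
    rw [Int.cast_neg, abs_neg] at h2
    have h3 := (abs_le.1 h2).2
    simp only [← sub_eq_add_neg] at h3
    rw [Finset.sum_congr rfl fun (m : ℕ) _ => hind (m : ℤ), Finset.sum_add_distrib, Finset.sum_sub_distrib,
      Finset.sum_const, Finset.card_range, nsmul_eq_mul] at h1
    linarith
  have hcard' : ((badSites (fun m => lam * v (x + m * α)) l (lam * γm * t) n).ncard : ℝ)
      ≤ |(l : ℝ)| + G.card := by
    have : ((l.natAbs : ℕ) : ℝ) = |(l : ℝ)| := by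
      rw [Nat.cast_natAbs, Int.cast_abs]
    rw [← this]
    exact_mod_cast hcard
  linarith

/-! ### Energy cells -/

/-- The cells `(a + j s, a + (j + 1) s]` are disjoint, and those whose closure meets `K` lie in the
closed `s`-thickening of `K`; hence their number times `s` is at most the measure of this
thickening. -/
lemma card_cells_mul_le (K : Set ℝ) (a s : ℝ) (hs : 0 < s) (J : Finset ℕ)
    (hJ : ∀ j ∈ J, ¬ Disjoint (Set.Icc (a + j * s) (a + j * s + s)) K) :
    ENNReal.ofReal (J.card * s) ≤ volume (Metric.cthickening s K) := by
  have hdisj : (J : Set ℕ).PairwiseDisjoint fun j : ℕ => Set.Ioc (a + j * s) (a + j * s + s) := by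
    intro i _ j _ hij
    refine Set.disjoint_left.2 fun y hy hy' => hij ?_
    have h1 : (i : ℝ) < j + 1 := by nlinarith [hy.1, hy'.2]
    have h2 : (j : ℝ) < i + 1 := by nlinarith [hy.2, hy'.1]
    have h1' : i < j + 1 := by exact_mod_cast h1
    have h2' : j < i + 1 := by exact_mod_cast h2
    omega
  calc ENNReal.ofReal (J.card * s)
      = ∑ j ∈ J, volume (Set.Ioc (a + j * s) (a + j * s + s)) := by
        simp only [Real.volume_Ioc, add_sub_cancel_left]
        rw [Finset.sum_const, nsmul_eq_mul, ENNReal.ofReal_mul (by positivity),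
          ENNReal.ofReal_natCast]
    _ = volume (⋃ j ∈ J, Set.Ioc (a + j * s) (a + j * s + s)) :=
        (measure_biUnion_finset hdisj fun _ _ => measurableSet_Ioc).symm
    _ ≤ volume (Metric.cthickening s K) := by
        refine measure_mono (Set.iUnion₂_subset fun j hj y hy => ?_)
        obtain ⟨z, hz, hzK⟩ := Set.not_disjoint_iff.1 (hJ j hj)
        refine Metric.mem_cthickening_of_dist_le y z s K hzK ?_
        rw [Real.dist_eq, abs_le]
        constructor <;> linarith [hy.1, hy.2, hz.1, hz.2]

/-- the spectrum of `H(x)` on `ℓ²(ℤ)` has positive Lebesgue measure. -/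
theorem spectrum_positive_measure
    (α lam γm γp : ℝ) (v : ℝ → ℝ)
    (hα : Irrational α) (hlam : 0 < lam) (hγm : 0 < γm) (hγp : 0 < γp)
    (hper : ∀ x : ℝ, v (x + 1) = v x) (hv0 : v 0 = 0)
    (hmono : ∀ x y : ℝ, 0 ≤ x → x ≤ y → y < 1 →
      γm * (y - x) ≤ v y - v x ∧ v y - v x ≤ γp * (y - x))
    (x : ℝ) :
    ∀ T : lp (fun _ : ℤ => ℝ) 2 →L[ℝ] lp (fun _ : ℤ => ℝ) 2,
      (∀ (ψ : lp (fun _ : ℤ => ℝ) 2) (m : ℤ),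
        (T ψ : ∀ _ : ℤ, ℝ) m = (ψ : ∀ _ : ℤ, ℝ) (m + 1) + (ψ : ∀ _ : ℤ, ℝ) (m - 1)
          + lam * v (x + (m : ℝ) * α) * (ψ : ∀ _ : ℤ, ℝ) m) →
      0 < volume (spectrum ℝ T) := by
  classical
  intro T hT
  have hS : IsSchrodinger T (fun m => lam * v (x + m * α)) := hT
  let d : ∀ n, BoxDiag T n := boxDiag hS.isSymmetric
  by_contra hvol
  have hvol0 : volume (spectrum ℝ T) = 0 := by simpa using hvol
  have hc : 0 < lam * γm := mul_pos hlam hγm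
  -- A thickening of the spectrum of measure less than `lam γm / 2`.
  have htend := tendsto_measure_cthickening_of_isCompact (μ := (volume : Measure ℝ))
    (spectrum.isCompact (𝕜 := ℝ) T)
  rw [hvol0] at htend
  have hev : ∀ᶠ r in nhds (0 : ℝ), volume (Metric.cthickening r (spectrum ℝ T))
      < ENNReal.ofReal (lam * γm / 2) :=
    htend.eventually_lt_const (by simpa using hc)
  obtain ⟨r, hr, hr'⟩ := Metric.eventually_nhds_iff.1 hev
  obtain ⟨l, p, ht0, ht⟩ := exists_small_mul_sub α hα (ε := min 1 (r / (lam * γm)))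
    (by positivity)
  have ht1 := lt_of_lt_of_le ht (min_le_left _ _)
  have ht2 := lt_of_lt_of_le ht (min_le_right _ _)
  set t : ℝ := l * α - p with htdef
  set s : ℝ := lam * γm * t with hsdef
  have hs : 0 < s := mul_pos hc ht0
  have hsr : s < r := by rwa [lt_div_iff₀ hc, mul_comm] at ht2
  -- All eigenvalues lie in the first `M` cells to the right of `a`.
  let a : ℝ := -(‖T‖ + 1)
  obtain ⟨M, hM⟩ := exists_nat_gt ((2 * ‖T‖ + 1) / s)
  rw [div_lt_iff₀ hs] at hM
  let cell : ℕ → Set ℝ := fun j => Set.Ioc (a + j * s) (a + j * s + s)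
  have hcover : ∀ n i, ∃ j ∈ Finset.range M, (d n).μ i ∈ cell j := by
    intro n i
    have hμ := abs_le.1 ((d n).abs_μ_le i)
    have hpos : 0 < ((d n).μ i - a) / s := div_pos (by simp only [a]; linarith [hμ.1]) hs
    set k : ℕ := ⌈((d n).μ i - a) / s⌉₊ with hk
    have hk0 : 0 < k := Nat.ceil_pos.2 hpos
    have hk1 : ((d n).μ i - a) / s ≤ k := Nat.le_ceil _
    have hk2 : (k : ℝ) < ((d n).μ i - a) / s + 1 := Nat.ceil_lt_add_one hpos.le
    have hk3 : (((k - 1 : ℕ) : ℝ)) = k - 1 := by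
      rw [Nat.cast_sub hk0, Nat.cast_one]
    rw [div_le_iff₀ hs] at hk1
    have hk4 : ((k : ℝ) - 1) * s < (d n).μ i - a := by
      rw [← lt_div_iff₀ hs]
      linarith
    refine ⟨k - 1, ?_, ?_, ?_⟩
    · rw [Finset.mem_range]
      have : ((k - 1 : ℕ) : ℝ) < M := by
        rw [hk3]
        have : ((k : ℝ) - 1) * s < M * s := by
          simp only [a] at hk4
          linarith [hμ.2]
        exact lt_of_mul_lt_mul_right this hs.le
      exact_mod_cast this
    · rw [hk3]
      linarith
    · rw [hk3]
      linarith
  have hcount : ∀ n, n ≤ ∑ j ∈ Finset.range M, Nat.card {i // (d n).μ i ∈ cell j} := by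
    intro n
    calc n = (Finset.univ : Finset (Fin n)).card := by simp
      _ ≤ ((Finset.range M).biUnion fun j => Finset.univ.filter fun i => (d n).μ i ∈ cell j).card :=
        Finset.card_le_card fun i _ => by
          obtain ⟨j, hj, hij⟩ := hcover n i
          exact Finset.mem_biUnion.2 ⟨j, hj, by simpa using hij⟩
      _ ≤ ∑ j ∈ Finset.range M, (Finset.univ.filter fun i => (d n).μ i ∈ cell j).card :=
        Finset.card_biUnion_le
      _ = _ := Finset.sum_congr rfl fun j _ => by
        rw [Nat.card_eq_fintype_card, Fintype.card_subtype]
  -- `J` indexes the cells that meet the spectrum.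
  let J : Finset ℕ := (Finset.range M).filter fun j : ℕ =>
    ¬ Disjoint (Set.Icc (a + j * s) (a + j * s + s)) (spectrum ℝ T)
  have hJ : (J.card : ℝ) * t < 1 / 2 := by
    have h1 := card_cells_mul_le (spectrum ℝ T) a s hs J fun j hj => (Finset.mem_filter.1 hj).2
    have h2 := h1.trans_lt (hr' (y := s) (by rwa [Real.dist_eq, sub_zero, abs_of_pos hs]))
    rw [ENNReal.ofReal_lt_ofReal_iff (by positivity)] at h2
    have h3 : (J.card : ℝ) * t * (lam * γm) < 1 / 2 * (lam * γm) := by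
      calc (J.card : ℝ) * t * (lam * γm) = J.card * s := by rw [hsdef]; ring
        _ < lam * γm / 2 := h2
        _ = _ := by ring
    exact lt_of_mul_lt_mul_right h3 hc.le
  have hfree : ∀ j : ℕ, ∃ C : ℕ, j ∈ Finset.range M → j ∉ J →
      ∀ n, Nat.card {i // (d n).μ i ∈ cell j} ≤ C := by
    intro j
    by_cases hj : Disjoint (Set.Icc (a + j * s) (a + j * s + s)) (spectrum ℝ T)
    · obtain ⟨C, hC⟩ := exists_card_eigenvalues_le_of_disjoint hS d isCompact_Icc hj
      refine ⟨C, fun _ _ n => le_trans ?_ (hC n)⟩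
      exact Nat.card_mono (Set.toFinite {i | (d n).μ i ∈ Set.Icc (a + j * s) (a + j * s + s)})
        fun i hi => Set.Ioc_subset_Icc_self hi
    · exact ⟨0, fun h h' => absurd (Finset.mem_filter.2 ⟨h, hj⟩) h'⟩
  choose C hC using hfree
  have hbound : ∀ n : ℕ, (n : ℝ) ≤ J.card * (t * n + 2 * |(l : ℝ)|)
      + ∑ j ∈ Finset.range M, (C j : ℝ) := by
    intro n
    have hb := ncard_badSites_le α lam γm v hlam hper
      (fun x y h1 h2 h3 => (hmono x y h1 h2 h3).1) x l p ht0 ht1 n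
    have hcell : ∀ j ∈ Finset.range M, (Nat.card {i // (d n).μ i ∈ cell j} : ℝ)
        ≤ (if j ∈ J then t * n + 2 * |(l : ℝ)| else 0) + C j := by
      intro j hj
      by_cases hjJ : j ∈ J
      · rw [if_pos hjJ]
        have h := card_eigenvalues_window_le hS (d n) l hs.le (a + j * s)
        have h' : (Nat.card {i // (d n).μ i ∈ cell j} : ℝ) ≤ _ := Nat.cast_le.2 h
        have : (0 : ℝ) ≤ C j := Nat.cast_nonneg _
        linarith
      · rw [if_neg hjJ, zero_add]
        exact_mod_cast hC j hj hjJ n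
    calc (n : ℝ) ≤ ((∑ j ∈ Finset.range M, Nat.card {i // (d n).μ i ∈ cell j} : ℕ) : ℝ) :=
        Nat.cast_le.2 (hcount n)
      _ = ∑ j ∈ Finset.range M, (Nat.card {i // (d n).μ i ∈ cell j} : ℝ) := Nat.cast_sum _ _
      _ ≤ ∑ j ∈ Finset.range M, ((if j ∈ J then t * n + 2 * |(l : ℝ)| else 0) + (C j : ℝ)) :=
        Finset.sum_le_sum hcell
      _ = _ := by
        rw [Finset.sum_add_distrib, ← Finset.sum_filter, Finset.sum_const, nsmul_eq_mul]
        congr 3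
        rw [Finset.filter_mem_eq_inter, Finset.inter_eq_right.2 (Finset.filter_subset _ _)]
  obtain ⟨n, hn⟩ := exists_nat_gt
    (2 * (J.card * (2 * |(l : ℝ)|) + ∑ j ∈ Finset.range M, (C j : ℝ)))
  have h := hbound n
  have hJn : (J.card : ℝ) * t * n ≤ 1 / 2 * n :=
    mul_le_mul_of_nonneg_right hJ.le (Nat.cast_nonneg n)
  nlinarith

end
end
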